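/- Let h and h̃ be framing data with images A = h(ℝ × [0,1]) and Ã = h̃(ℝ × [0,1]) and associated paths X and X̃ respectively, and assume the topological frontier of A is contained in h(ℝ × {0}) ∪ h(ℝ × {1}) and the topological frontier of Ã is contained in h̃(ℝ × {0}) ∪ h̃(ℝ × {1}). Then the following are equivalent: (1) there exists a homeomorphism ψ : A → Ã which is complex-differentiable at every point of the interior of A, whose inverse is complex-differentiable at every point of the interior of Ã, and which satisfies ψ(h(θ,t)) = h̃(θ,t) for all θ ∈ ℝ and t ∈ [0,1]; (2) X(θ,t) = X̃(θ,t) for all θ ∈ ℝ and t ∈ [0,1]. Moreover, the map ψ in (1) is unique if it exists. -/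

import Mathlib

open Set Complex Real

/-- An isomorphism of framed annuli: `ψ : A → Ã` is a homeomorphism (with inverse `χ`),
holomorphic on the interior, with holomorphic inverse, intertwining the framings. -/
def IsFramedIso (h ht : ℝ × ℝ → ℂ) (A At : Set ℂ) (ψ χ : ℂ → ℂ) : Prop :=
  ContinuousOn ψ A ∧ ContinuousOn χ At ∧ Set.MapsTo ψ A At ∧ Set.MapsTo χ At A ∧
  (∀ z ∈ A, χ (ψ z) = z) ∧ (∀ z ∈ At, ψ (χ z) = z) ∧
  DifferentiableOn ℂ ψ (interior A) ∧ DifferentiableOn ℂ χ (interior At) ∧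
  ∀ θ : ℝ, ∀ t ∈ Set.Icc (0:ℝ) 1, ψ (h (θ, t)) = ht (θ, t)

section FramedHelpers
open Filter Topology

noncomputable section

def pdx (h : ℝ × ℝ → ℂ) (z : ℝ × ℝ) : ℂ := fderiv ℝ h z (1, 0)
def pdt (h : ℝ × ℝ → ℂ) (z : ℝ × ℝ) : ℂ := fderiv ℝ h z (0, 1)

end

structure FD (h : ℝ × ℝ → ℂ) : Prop where
  sm : ContDiff ℝ (⊤ : ℕ∞) h
  per : ∀ θ t, h (θ + 2 * π, t) = h (θ, t)
  inj : ∀ t ∈ Icc (0:ℝ) 1, InjOn (fun θ => h (θ, t)) (Ico 0 (2 * π))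
  nz : ∀ θ : ℝ, ∀ t ∈ Icc (0:ℝ) 1, pdx h (θ, t) ≠ 0
  inw : ∀ θ : ℝ, ∀ t ∈ Icc (0:ℝ) 1, (pdt h (θ, t) / pdx h (θ, t)).im ≤ 0

theorem smooth_pdx {h : ℝ × ℝ → ℂ} (hs : ContDiff ℝ (⊤ : ℕ∞) h) : ContDiff ℝ (⊤ : ℕ∞) (pdx h) := by
  unfold pdx
  exact (hs.fderiv_right (m := (⊤ : ℕ∞)) (by simp)).clm_apply contDiff_const

theorem smooth_pdt {h : ℝ × ℝ → ℂ} (hs : ContDiff ℝ (⊤ : ℕ∞) h) : ContDiff ℝ (⊤ : ℕ∞) (pdt h) := by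
  unfold pdt
  exact (hs.fderiv_right (m := (⊤ : ℕ∞)) (by simp)).clm_apply contDiff_const

theorem smooth_diff {h : ℝ × ℝ → ℂ} (hs : ContDiff ℝ (⊤ : ℕ∞) h) : Differentiable ℝ h :=
  hs.differentiable (by simp)

theorem fderiv_eq_pd (h : ℝ × ℝ → ℂ) (z : ℝ × ℝ) (v : ℝ × ℝ) :
    fderiv ℝ h z v = v.1 * pdx h z + v.2 * pdt h z := by
  have : v = v.1 • ((1:ℝ), (0:ℝ)) + v.2 • ((0:ℝ), (1:ℝ)) := by ext <;> simp
  conv_lhs => rw [this]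
  simp only [map_add, map_smul]
  simp [pdx, pdt]

theorem hasDerivAt_path {h : ℝ × ℝ → ℂ} (hs : ContDiff ℝ (⊤ : ℕ∞) h) {f g : ℝ → ℝ} {f' g' s : ℝ}
    (hf : HasDerivAt f f' s) (hg : HasDerivAt g g' s) :
    HasDerivAt (fun r => h (f r, g r)) (f' * pdx h (f s, g s) + g' * pdt h (f s, g s)) s := by
  have h1 := (smooth_diff hs (f s, g s)).hasFDerivAt
  have h2 := h1.comp_hasDerivAt s (hf.prodMk hg)
  rw [fderiv_eq_pd] at h2
  exact h2

theorem hasDerivAt_x {h : ℝ × ℝ → ℂ} (hs : ContDiff ℝ (⊤ : ℕ∞) h) (x t : ℝ) :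
    HasDerivAt (fun r => h (r, t)) (pdx h (x, t)) x := by
  simpa using hasDerivAt_path hs (hasDerivAt_id x) (hasDerivAt_const x t)

theorem hasDerivAt_t {h : ℝ × ℝ → ℂ} (hs : ContDiff ℝ (⊤ : ℕ∞) h) (x t : ℝ) :
    HasDerivAt (fun r => h (x, r)) (pdt h (x, t)) t := by
  simpa using hasDerivAt_path hs (hasDerivAt_const t x) (hasDerivAt_id t)

theorem pdx_per {h : ℝ × ℝ → ℂ} (hs : ContDiff ℝ (⊤ : ℕ∞) h)
    (hp : ∀ θ t, h (θ + 2 * π, t) = h (θ, t)) (θ t : ℝ) : pdx h (θ + 2 * π, t) = pdx h (θ, t) := by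
  have h1 := (hasDerivAt_x hs (θ + 2 * π) t).comp_add_const θ (2 * π)
  have h2 := hasDerivAt_x hs θ t
  simp only [hp] at h1
  exact h1.unique h2

theorem pdt_per {h : ℝ × ℝ → ℂ} (hs : ContDiff ℝ (⊤ : ℕ∞) h)
    (hp : ∀ θ t, h (θ + 2 * π, t) = h (θ, t)) (θ t : ℝ) : pdt h (θ + 2 * π, t) = pdt h (θ, t) := by
  have h1 := (hasDerivAt_t hs (θ + 2 * π) t)
  have h2 := hasDerivAt_t hs θ t
  simp only [hp] at h1
  exact h1.unique h2

theorem pd_symm {h : ℝ × ℝ → ℂ} (hs : ContDiff ℝ (⊤ : ℕ∞) h) (z : ℝ × ℝ) :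
    pdt (pdx h) z = pdx (pdt h) z := by
  have h1 : IsSymmSndFDerivAt ℝ h z := hs.contDiffAt.isSymmSndFDerivAt (by simp; exact WithTop.coe_le_coe.mpr (le_top (a := (2:ℕ∞))))
  have hd : DifferentiableAt ℝ (fderiv ℝ h) z :=
    (hs.fderiv_right (m := (⊤ : ℕ∞)) (by simp)).differentiable (by simp) z
  have h2 : ∀ v w, fderiv ℝ (fun y => fderiv ℝ h y v) z w = fderiv ℝ (fderiv ℝ h) z w v := by
    intro v w
    rw [fderiv_clm_apply hd (differentiableAt_const v)]
    simp
  show fderiv ℝ (fun y => fderiv ℝ h y (1,0)) z (0,1) = fderiv ℝ (fun y => fderiv ℝ h y (0,1)) z (1,0)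
  rw [h2, h2]
  exact h1 _ _

theorem flow_exists {h : ℝ × ℝ → ℂ} (H : FD h) (α a : ℝ) (ha : a ∈ Icc (0:ℝ) 1) :
    ∃ φ : ℝ → ℝ, φ a = α ∧ ∀ᶠ s in 𝓝 a,
      HasDerivAt φ (-(pdt h (φ s, s) / pdx h (φ s, s))).re s := by
  let v : ℝ × ℝ → ℝ × ℝ := fun z => ((-(pdt h z / pdx h z)).re, 1)
  have hv : ContDiffAt ℝ 1 v (α, a) := by
    have h1 : ContDiffAt ℝ (⊤ : ℕ∞) (fun z => -(pdt h z / pdx h z)) (α, a) :=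
      by
      simp only [div_eq_mul_inv]
      exact ((smooth_pdt H.sm).contDiffAt.mul ((smooth_pdx H.sm).contDiffAt.inv (H.nz α a ha))).neg
    have h2 : ContDiffAt ℝ (⊤ : ℕ∞) (fun z => (-(pdt h z / pdx h z)).re) (α, a) :=
      (Complex.reCLM.contDiff.contDiffAt).comp (α, a) h1
    exact (h2.prodMk contDiffAt_const).of_le (by exact_mod_cast le_top)
  obtain ⟨f, hf0, ε, hε, hf⟩ :=
    hv.exists_forall_mem_closedBall_exists_eq_forall_mem_Ioo_hasDerivAt₀ a
  have h1 : ∀ s ∈ Ioo (a - ε) (a + ε), HasDerivAt (fun r => (f r).1) (v (f s)).1 s :=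
    fun s hs => (hasFDerivAt_fst (p := f s)).comp_hasDerivAt s (hf s hs)
  have h2 : ∀ s ∈ Ioo (a - ε) (a + ε), HasDerivAt (fun r => (f r).2) 1 s :=
    fun s hs => (hasFDerivAt_snd (p := f s)).comp_hasDerivAt s (hf s hs)
  have haI : a ∈ Ioo (a - ε) (a + ε) := ⟨by linarith, by linarith⟩
  have h3 : ∀ s ∈ Ioo (a - ε) (a + ε), (f s).2 = s := by
    intro s hs
    have h4 : EqOn (fun r => (f r).2) (fun r => r) (Ioo (a - ε) (a + ε)) := by
      apply isOpen_Ioo.eqOn_of_deriv_eq (𝕜 := ℝ) isPreconnected_Ioo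
        (fun r hr => (h2 r hr).differentiableAt.differentiableWithinAt)
        differentiableOn_id _ haI
      · simp [hf0]
      · intro r hr
        rw [(h2 r hr).deriv]
        simp
    exact h4 hs
  refine ⟨fun r => (f r).1, by simp [hf0], ?_⟩
  filter_upwards [isOpen_Ioo.mem_nhds haI] with s hs
  have h5 : f s = ((f s).1, s) := Prod.ext rfl (h3 s hs)
  have h6 := h1 s hs
  simp only [v] at h6
  rw [h5] at h6
  exact h6

theorem FD.per_int {h : ℝ × ℝ → ℂ} (hp : ∀ θ t, h (θ + 2 * π, t) = h (θ, t)) (k : ℤ) (θ t : ℝ) :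
    h (θ + k * (2 * π), t) = h (θ, t) := by
  have : Function.Periodic (fun x => h (x, t)) (2 * π) := fun x => hp x t
  exact this.int_mul k θ

theorem FD.inj_mod {h : ℝ × ℝ → ℂ} (H : FD h) {x y t : ℝ} (ht : t ∈ Icc (0:ℝ) 1)
    (hxy : h (x, t) = h (y, t)) : ∃ k : ℤ, y = x + k * (2 * π) := by
  have hpi : (0:ℝ) < 2 * π := by positivity
  have e : ∀ x : ℝ, ∃ k : ℤ, x + k * (2 * π) ∈ Ico 0 (2 * π) := by
    intro x
    obtain ⟨k, hk, -⟩ := existsUnique_add_zsmul_mem_Ico hpi x 0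
    exact ⟨k, by simpa using hk⟩
  obtain ⟨k, hk⟩ := e x
  obtain ⟨l, hl⟩ := e y
  have := H.inj t ht hk hl (by simp only [FD.per_int H.per, hxy])
  refine ⟨k - l, ?_⟩
  push_cast
  linarith

theorem mod_centered (x θ : ℝ) : ∃ k : ℤ, |x + k * (2 * π) - θ| ≤ π := by
  have hpi : (0:ℝ) < 2 * π := by positivity
  obtain ⟨k, hk, -⟩ := existsUnique_add_zsmul_mem_Ico hpi x (θ - π)
  refine ⟨k, ?_⟩
  have : k • (2 * π) = k * (2 * π) := by simp
  rw [this] at hk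
  rw [abs_le]
  constructor <;> linarith [hk.1, hk.2]

/-- chord lemma -/
theorem chord {h : ℝ × ℝ → ℂ} (H : FD h) : ∃ ε > (0:ℝ), ∃ m > (0:ℝ), ∀ θ : ℝ, ∀ s ∈ Icc (0:ℝ) 1,
    ∀ x : ℝ, |x| ≤ π → ∃ E : ℂ, h (θ + x, s) - h (θ, s) = x * E * pdx h (θ, s) ∧ m ≤ ‖E‖ ∧
      (|x| < ε → ‖E - 1‖ < 1/4) := by
  let D : ℝ × ℝ × ℝ → ℂ := fun q => ∫ τ in (0:ℝ)..1, pdx h (q.1 + τ * q.2.1, q.2.2)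
  have hpc : Continuous (pdx h) := (smooth_pdx H.sm).continuous
  have hD : Continuous D := by
    apply intervalIntegral.continuous_parametric_intervalIntegral_of_continuous'
    exact hpc.comp (by fun_prop)
  have hD0 : ∀ θ s, D (θ, 0, s) = pdx h (θ, s) := by
    intro θ s; simp [D]
  have hDx : ∀ θ x s, h (θ + x, s) - h (θ, s) = x * D (θ, x, s) := by
    intro θ x s
    have h1 : ∀ τ ∈ uIcc (0:ℝ) 1, HasDerivAt (fun τ => h (θ + τ * x, s))
        (x * pdx h (θ + τ * x, s)) τ := by
      intro τ _
      have := hasDerivAt_path H.sm (((hasDerivAt_id τ).mul_const x).const_add θ)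
        (hasDerivAt_const τ s)
      simpa using this
    have h2 := intervalIntegral.integral_eq_sub_of_hasDerivAt h1
      (Continuous.intervalIntegrable (by fun_prop) _ _)
    rw [intervalIntegral.integral_const_mul] at h2
    simp only [one_mul, zero_mul, add_zero] at h2
    exact h2.symm
  let K : Set (ℝ × ℝ × ℝ) := Icc 0 (2 * π) ×ˢ Icc (-π) π ×ˢ Icc 0 1
  have hK : IsCompact K := isCompact_Icc.prod (isCompact_Icc.prod isCompact_Icc)
  let E : ℝ × ℝ × ℝ → ℂ := fun q => D q / pdx h (q.1, q.2.2)
  have hE : ContinuousOn E K := by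
    apply hD.continuousOn.div (hpc.comp (by fun_prop)).continuousOn
    rintro ⟨θ, x, s⟩ ⟨_, _, hs⟩
    exact H.nz θ s hs
  have hEnz : ∀ q ∈ K, E q ≠ 0 := by
    rintro ⟨θ, x, s⟩ ⟨h1, h2, hs⟩
    have hs : s ∈ Icc (0:ℝ) 1 := hs
    have h2 : x ∈ Icc (-π) π := h2
    refine div_ne_zero ?_ (H.nz θ s hs)
    intro h0
    by_cases hx : x = 0
    · subst hx
      rw [hD0] at h0
      exact H.nz θ s hs h0
    · have h3 := hDx θ x s
      rw [h0, mul_zero, sub_eq_zero] at h3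
      obtain ⟨k, hk⟩ := H.inj_mod hs h3
      have hk2 : x = - k * (2 * π) := by linarith
      have hpi := Real.pi_pos
      have hk3 : k = 0 := by
        have a1 : (k:ℝ) < 1 := by nlinarith [h2.1, h2.2]
        have a2 : (-1:ℝ) < k := by nlinarith [h2.1, h2.2]
        have a1' : k < 1 := by exact_mod_cast a1
        have a2' : -1 < k := by exact_mod_cast a2
        omega
      subst hk3
      simp at hk2
      exact hx hk2
  have hpi := Real.pi_pos
  have hKne : K.Nonempty := ⟨(0,0,0), ⟨⟨le_rfl, by positivity⟩, ⟨by simp; positivity, by positivity⟩, ⟨le_rfl, zero_le_one⟩⟩⟩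
  obtain ⟨q0, hq0, hmin⟩ := hK.exists_isMinOn hKne hE.norm
  have huc := hK.uniformContinuousOn_of_continuous hE
  rw [Metric.uniformContinuousOn_iff] at huc
  obtain ⟨ε, hε, hu⟩ := huc (1/4) (by norm_num)
  refine ⟨ε, hε, ‖E q0‖, norm_pos_iff.2 (hEnz q0 hq0), ?_⟩
  intro θ s hs x hx
  obtain ⟨k, hk, -⟩ := existsUnique_add_zsmul_mem_Ico (show (0:ℝ) < 2 * π by positivity) θ 0
  have e : k • (2 * π) = k * (2 * π) := by simp
  rw [e] at hk
  set θ' := θ + k * (2 * π) with hθ'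
  have hx' := abs_le.1 hx
  have hmem : (θ', x, s) ∈ K := ⟨⟨hk.1, by linarith [hk.2]⟩, ⟨hx'.1, hx'.2⟩, hs⟩
  have hmem0 : (θ', (0:ℝ), s) ∈ K := ⟨⟨hk.1, by linarith [hk.2]⟩, ⟨by linarith, by linarith⟩, hs⟩
  refine ⟨E (θ', x, s), ?_, hmin hmem, ?_⟩
  · have h1 := hDx θ' x s
    have h2 : h (θ' + x, s) = h (θ + x, s) := by
      rw [← FD.per_int H.per k (θ + x) s]; congr 2; rw [hθ']; ring
    have h3 : h (θ', s) = h (θ, s) := FD.per_int H.per k θ s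
    have h4 : pdx h (θ', s) = pdx h (θ, s) := FD.per_int (pdx_per H.sm H.per) k θ s
    rw [← h2, ← h3, h1, ← h4]
    have := H.nz θ' s hs
    simp only [E]
    field_simp
  · intro hxe
    have h1 := hu _ hmem _ hmem0 (by simp [Prod.dist_eq, hxe, hε])
    have h2 : E (θ', 0, s) = 1 := by
      simp only [E, hD0]
      exact div_self (H.nz _ s hs)
    rwa [h2, dist_eq_norm] at h1

/-- collar lemma -/
theorem collar {h : ℝ × ℝ → ℂ} (H : FD h) : ∃ ε > (0:ℝ), ∀ θ x : ℝ, ∀ s ∈ Icc (0:ℝ) 1, ∀ w : ℂ,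
    ‖w‖ < ε → |w.im| < |w.re| → h (x, s) ≠ h (θ, s) + I * w * pdx h (θ, s) := by
  obtain ⟨ε, hε, m, hm, hc⟩ := chord H
  refine ⟨ε * m, by positivity, ?_⟩
  intro θ x s hs w hw hw2 heq
  obtain ⟨k, hk⟩ := mod_centered x θ
  set y := x + k * (2 * π) - θ with hy
  obtain ⟨E, h1, h2, h3⟩ := hc θ s hs y hk
  have e1 : h (θ + y, s) = h (x, s) := by
    rw [← FD.per_int H.per k x s]; congr 2; rw [hy]; ring
  rw [e1, heq, add_sub_cancel_left] at h1
  have h4 : I * w = y * E := mul_right_cancel₀ (H.nz θ s hs) h1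
  have h5 : ‖w‖ = |y| * ‖E‖ := by
    have := congrArg norm h4
    simpa using this
  have h6 : |y| < ε := by
    by_contra hcon
    push Not at hcon
    have : ε * m ≤ |y| * ‖E‖ := mul_le_mul hcon h2 hm.le (abs_nonneg _)
    linarith
  have h7 := h3 h6
  have h8 : |E.re - 1| < 1/4 := lt_of_le_of_lt (by simpa using Complex.abs_re_le_norm (E - 1)) h7
  have h9 : |E.im| < 1/4 := lt_of_le_of_lt (by simpa using Complex.abs_im_le_norm (E - 1)) h7
  have r1 := congrArg Complex.re h4
  have r2 := congrArg Complex.im h4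
  simp at r1 r2
  rw [r2, show w.im = - (y * E.re) by linarith, abs_neg, abs_mul, abs_mul] at hw2
  have h10 : |E.im| < |E.re| := by
    rw [abs_lt] at h8
    have := le_abs_self E.re
    linarith
  nlinarith [abs_nonneg y]

noncomputable section
/-- Cauchy type integral along the curve at time `s`. -/
def Cau (g h : ℝ × ℝ → ℂ) (p : ℂ) (s : ℝ) : ℂ :=
  ∫ x in (0:ℝ)..(2 * π), g (x, s) * pdx h (x, s) / (h (x, s) - p)
end

def one2 : ℝ × ℝ → ℂ := fun _ => 1

theorem Cau_int {h : ℝ × ℝ → ℂ} (hs : ContDiff ℝ (⊤ : ℕ∞) h)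
    (hp : ∀ θ t, h (θ + 2 * π, t) = h (θ, t)) {p : ℂ} {s : ℝ} (hn : ∀ x, h (x, s) ≠ p) :
    ∃ n : ℤ, Cau one2 h p s = n * (2 * π * I) := by
  let f : ℝ → ℂ := fun x => pdx h (x, s) / (h (x, s) - p)
  have hf : Continuous f := by
    have h1 := (smooth_pdx hs).continuous
    have h2 := hs.continuous
    apply Continuous.div (by fun_prop) (by fun_prop)
    intro x
    exact sub_ne_zero.2 (hn x)
  let F : ℝ → ℂ := fun x => ∫ y in (0:ℝ)..x, f y
  have hF : ∀ x, HasDerivAt F (f x) x := fun x =>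
    intervalIntegral.integral_hasDerivAt_right (hf.intervalIntegrable _ _)
      hf.stronglyMeasurable.stronglyMeasurableAtFilter hf.continuousAt
  let G : ℝ → ℂ := fun x => Complex.exp (-F x) * (h (x, s) - p)
  have hG : ∀ x, HasDerivAt G 0 x := by
    intro x
    have h1 := (((hF x).neg).cexp).mul ((hasDerivAt_x hs x s).sub_const p)
    have := sub_ne_zero.2 (hn x)
    have e : cexp ((-F) x) * -f x * (h (x, s) - p) + cexp ((-F) x) * pdx h (x, s) = 0 := by
      simp only [f]
      field_simp
      ring
    rw [e] at h1
    exact h1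
  have h1 : G (2 * π) = G 0 := is_const_of_deriv_eq_zero (fun x => (hG x).differentiableAt)
    (fun x => (hG x).deriv) _ _
  have h2 : h (2 * π, s) = h (0, s) := by simpa using hp 0 s
  have h3 : F 0 = 0 := by simp [F]
  simp only [G, h2, h3, neg_zero, Complex.exp_zero, one_mul] at h1
  have h4 : Complex.exp (-F (2 * π)) = 1 := by
    have := sub_ne_zero.2 (hn 0)
    exact mul_right_cancel₀ this (by rw [h1, one_mul])
  obtain ⟨n, hn⟩ := Complex.exp_eq_one_iff.1 h4
  refine ⟨-n, ?_⟩
  have h5 : Cau one2 h p s = F (2 * π) := by simp [Cau, F, f, one2]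
  rw [h5]
  push_cast
  linear_combination -hn

def coneC (ε : ℝ) : Set ℂ := Metric.ball 0 ε ∩ {w | |w.im| < w.re}

theorem coneC_convex (ε : ℝ) : Convex ℝ (coneC ε) := by
  apply (convex_ball 0 ε).inter
  have : {w : ℂ | |w.im| < w.re} = {w : ℂ | 0 < (reCLM - imCLM) w} ∩ {w : ℂ | 0 < (reCLM + imCLM) w} := by
    ext w
    simp only [mem_ofPred_eq, mem_inter_iff, abs_lt]
    simp
    constructor
    · rintro ⟨a, b⟩; exact ⟨b, by linarith⟩
    · rintro ⟨a, b⟩; exact ⟨by linarith, a⟩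
  rw [this]
  exact (convex_halfSpace_gt (reCLM - imCLM).isLinear 0).inter (convex_halfSpace_gt (reCLM + imCLM).isLinear 0)

theorem side_const {h : ℝ × ℝ → ℂ} (H : FD h) {ε : ℝ} (hε : 0 < ε)
    (hc : ∀ θ x : ℝ, ∀ s ∈ Icc (0:ℝ) 1, ∀ w : ℂ,
    ‖w‖ < ε → |w.im| < |w.re| → h (x, s) ≠ h (θ, s) + I * w * pdx h (θ, s)) (σ : ℝ) (hσ : |σ| = 1) :
    ∃ L : ℂ, ∀ θ : ℝ, ∀ s ∈ Icc (0:ℝ) 1, ∀ w ∈ coneC ε,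
      Cau one2 h (h (θ, s) + I * (σ * w) * pdx h (θ, s)) s = L := by
  let S : Set (ℝ × ℝ × ℂ) := univ ×ˢ Icc 0 1 ×ˢ coneC ε
  have hS : IsPreconnected S :=
    isPreconnected_univ.prod (isPreconnected_Icc.prod (coneC_convex ε).isPreconnected)
  let N : ℝ × ℝ × ℂ → ℂ := fun q =>
    Cau one2 h (h (q.1, q.2.1) + I * (σ * q.2.2) * pdx h (q.1, q.2.1)) q.2.1
  have hne : ∀ q ∈ S, ∀ x, h (x, q.2.1) ≠ h (q.1, q.2.1) + I * (σ * q.2.2) * pdx h (q.1, q.2.1) := by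
    rintro ⟨θ, s, w⟩ ⟨-, hs, hw⟩ x
    have hw1 : ‖w‖ < ε := by simpa using hw.1
    have hw2 : |w.im| < w.re := hw.2
    apply hc θ x s hs
    · simpa [hσ] using hw1
    · simpa [abs_mul, hσ] using lt_of_lt_of_le hw2 (le_abs_self _)
  have hNc : ContinuousOn N S := by
    rw [continuousOn_iff_continuous_domRestrict]
    have h1 := (smooth_pdx H.sm).continuous
    have h2 := H.sm.continuous
    apply intervalIntegral.continuous_parametric_intervalIntegral_of_continuous'
    apply Continuous.div
    · simp only [one2]; fun_prop
    · fun_prop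
    · rintro ⟨q, x⟩
      exact sub_ne_zero.2 (hne q.1 q.2 x)
  have hNi : ∀ q ∈ S, ∃ n : ℤ, N q = n * (2 * π * I) := fun q hq => Cau_int H.sm H.per (hne q hq)
  have hconst : ∀ q ∈ S, ∀ q' ∈ S, N q = N q' := by
    intro q hq q' hq'
    have hrc : ContinuousOn (fun q => (N q / (2 * π * I)).re) S := by
      apply Complex.continuous_re.comp_continuousOn
      exact hNc.div_const _
    have hri : MapsTo (fun q => (N q / (2 * π * I)).re) S (range ((↑) : ℤ → ℝ)) := by
      intro q hq
      obtain ⟨n, hn⟩ := hNi q hq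
      refine ⟨n, ?_⟩
      have : (2 * π * I : ℂ) ≠ 0 := Complex.two_pi_I_ne_zero
      simp only [hn]
      rw [mul_div_cancel_right₀ _ this]
      simp
    have hd : IsDiscrete (range ((↑) : ℤ → ℝ)) := by
      exact Int.isClosedEmbedding_coe_real.isEmbedding.isDiscrete_range
    have := hS.constant_of_mapsTo hd hrc hri hq hq'
    obtain ⟨n, hn⟩ := hNi q hq
    obtain ⟨n', hn'⟩ := hNi q' hq'
    simp only [hn, hn'] at this
    rw [mul_div_cancel_right₀ _ Complex.two_pi_I_ne_zero, mul_div_cancel_right₀ _ Complex.two_pi_I_ne_zero] at this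
    simp at this
    rw [hn, hn', this]
  refine ⟨N (0, 0, ((ε/2 : ℝ) : ℂ)), fun θ s hs w hw => hconst (θ, s, w) ⟨trivial, hs, hw⟩ _ ⟨trivial, ⟨le_rfl, zero_le_one⟩, ?_, ?_⟩⟩
  · simp [abs_of_pos hε]; exact hε
  · simp; exact hε

theorem pos_aux {T : ℝ → ℂ} (hT : Continuous T) {ε c : ℝ} (hε : 0 < ε) (hεπ : ε < π) (hc : 0 ≤ c) (hc2 : 2 * π * c < 1/5)
    (h1 : ∀ x, |x| ≤ π → -c ≤ (T x).re) (h2 : ∀ x, |x| ≤ ε → 1 / (10 * ε) ≤ (T x).re) :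
    0 < (∫ x in (-π)..π, T x).re := by
  have e : (∫ x in (-π)..π, T x).re = ∫ x in (-π)..π, (T x).re := by
    have := Complex.reCLM.intervalIntegral_comp_comm (hT.intervalIntegrable (μ := MeasureTheory.volume) (-π) π)
    simpa using this.symm
  have hR : Continuous (fun x => (T x).re) := Complex.continuous_re.comp hT
  have hi : ∀ a b, IntervalIntegrable (fun x => (T x).re) MeasureTheory.volume a b := fun a b => hR.intervalIntegrable a b
  rw [e, ← intervalIntegral.integral_add_adjacent_intervals (hi (-π) (-ε)) (hi (-ε) π),
    ← intervalIntegral.integral_add_adjacent_intervals (hi (-ε) ε) (hi ε π)]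
  have i1 : ∫ x in (-π)..(-ε), (-c) ≤ ∫ x in (-π)..(-ε), (T x).re :=
    intervalIntegral.integral_mono_on (by linarith) (by simp) (hi _ _) (fun x hx => h1 x (abs_le.2 ⟨hx.1, by linarith [hx.2]⟩))
  have i2 : ∫ x in (-ε)..ε, (1 / (10 * ε)) ≤ ∫ x in (-ε)..ε, (T x).re :=
    intervalIntegral.integral_mono_on (by linarith) (by simp) (hi _ _) (fun x hx => h2 x (abs_le.2 ⟨hx.1, by linarith [hx.2]⟩))
  have i3 : ∫ x in ε..π, (-c) ≤ ∫ x in ε..π, (T x).re :=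
    intervalIntegral.integral_mono_on (by linarith) (by simp) (hi _ _) (fun x hx => h1 x (abs_le.2 ⟨by linarith [hx.1], by linarith [hx.2]⟩))
  simp only [intervalIntegral.integral_const, smul_eq_mul] at i1 i2 i3
  have e2 : (ε - -ε) * (1 / (10 * ε)) = 1/5 := by field_simp; norm_num
  rw [e2] at i2
  nlinarith

/-- pointwise bound -/
theorem pt_aux {g E : ℂ} {x ε : ℝ} (hε : 0 < ε) (hg : ‖g - 1‖ < 1/4) (hE : ‖E - 1‖ < 1/4) :
    0 ≤ (2 * ε * g / (x ^ 2 * E ^ 2 + ε ^ 2)).re ∧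
    (|x| ≤ ε → 1 / (10 * ε) ≤ (2 * ε * g / (x ^ 2 * E ^ 2 + ε ^ 2)).re) := by
  set d : ℂ := x ^ 2 * E ^ 2 + ε ^ 2 with hd
  have hE2 : ‖E ^ 2 - 1‖ ≤ 9/16 := by
    have : E ^ 2 - 1 = (E - 1) * ((E - 1) + 2) := by ring
    rw [this, norm_mul]
    have h2 : ‖(E - 1) + 2‖ ≤ 9/4 := (norm_add_le _ _).trans (by simp; linarith)
    calc _ ≤ (1/4) * (9/4) := mul_le_mul hE.le h2 (norm_nonneg _) (by norm_num)
      _ = _ := by norm_num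
  have hdd : ‖d - ((x^2 + ε^2 : ℝ) : ℂ)‖ ≤ 9/16 * x^2 := by
    have : d - ((x^2 + ε^2 : ℝ) : ℂ) = ((x^2 : ℝ) : ℂ) * (E^2 - 1) := by rw [hd]; push_cast; ring
    rw [this, norm_mul, Complex.norm_real, Real.norm_of_nonneg (sq_nonneg x)]
    nlinarith [sq_nonneg x]
  have hdre : 7/16 * x^2 + ε^2 ≤ d.re := by
    have := (abs_le.1 ((Complex.abs_re_le_norm _).trans hdd)).1
    rw [Complex.sub_re, Complex.ofReal_re] at this
    linarith
  have hdn : ‖d‖ ≤ 25/16 * x^2 + ε^2 := by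
    have : d = (d - ((x^2 + ε^2 : ℝ) : ℂ)) + ((x^2 + ε^2 : ℝ) : ℂ) := by ring
    rw [this]
    refine (norm_add_le _ _).trans ?_
    rw [Complex.norm_real, Real.norm_of_nonneg (by positivity)]
    linarith
  have hnum : 3/4 * ε^2 ≤ (g * (starRingEnd ℂ) d).re := by
    have e : g * (starRingEnd ℂ) d = (starRingEnd ℂ) d + (g - 1) * (starRingEnd ℂ) d := by ring
    rw [e, Complex.add_re, Complex.conj_re]
    have h1 : |((g - 1) * (starRingEnd ℂ) d).re| ≤ 1/4 * (25/16 * x^2 + ε^2) := by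
      refine (Complex.abs_re_le_norm _).trans ?_
      rw [norm_mul, Complex.norm_conj]
      exact mul_le_mul hg.le hdn (norm_nonneg _) (by norm_num)
    have := (abs_le.1 h1).1
    nlinarith [sq_nonneg x]
  have hdpos : 0 < ‖d‖ := by
    have := Complex.re_le_norm d
    have : 0 < ε^2 := by positivity
    nlinarith [sq_nonneg x]
  have key : (2 * ε * g / d).re = 2 * ε * (g * (starRingEnd ℂ) d).re / ‖d‖^2 := by
    have : 2 * (ε:ℂ) * g / d = ((2 * ε / ‖d‖^2 : ℝ) : ℂ) * (g * (starRingEnd ℂ) d) := by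
      have h1 : d * (starRingEnd ℂ) d = ((‖d‖^2 : ℝ) : ℂ) := by
        rw [Complex.mul_conj, Complex.normSq_eq_norm_sq]
      have h2 : d ≠ 0 := norm_pos_iff.1 hdpos
      have h3 : (starRingEnd ℂ) d ≠ 0 := by simpa using h2
      rw [Complex.ofReal_div, ← h1]
      push_cast
      field_simp
    rw [this, Complex.re_ofReal_mul]
    ring
  rw [key]
  constructor
  · have : 0 ≤ (g * (starRingEnd ℂ) d).re := le_trans (by positivity) hnum
    positivity
  · intro hx
    have hx2 : x^2 ≤ ε^2 := sq_le_sq' (by linarith [(abs_le.1 hx).1]) (abs_le.1 hx).2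
    have hdn2 : ‖d‖ ≤ 41/16 * ε^2 := by linarith
    have hdn3 : ‖d‖^2 ≤ (41/16 * ε^2)^2 := by gcongr
    rw [div_le_div_iff₀ (by positivity) (by positivity)]
    have : 2 * ε * (3/4 * ε^2) ≤ 2 * ε * (g * (starRingEnd ℂ) d).re := by gcongr
    have h5 : 0 < ε^4 := by positivity
    nlinarith

theorem sides {h : ℝ × ℝ → ℂ} (H : FD h) : ∃ ε > (0:ℝ), ∃ L R : ℂ, L ≠ R ∧
    (∀ θ x : ℝ, ∀ s ∈ Icc (0:ℝ) 1, ∀ w : ℂ,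
      ‖w‖ < ε → |w.im| < |w.re| → h (x, s) ≠ h (θ, s) + I * w * pdx h (θ, s)) ∧
    (∀ θ : ℝ, ∀ s ∈ Icc (0:ℝ) 1, ∀ w : ℂ, ‖w‖ < ε → |w.im| < w.re →
      Cau one2 h (h (θ, s) + I * w * pdx h (θ, s)) s = L) ∧
    (∀ θ : ℝ, ∀ s ∈ Icc (0:ℝ) 1, ∀ w : ℂ, ‖w‖ < ε → |w.im| < -w.re →
      Cau one2 h (h (θ, s) + I * w * pdx h (θ, s)) s = R) := by
  obtain ⟨ε₀, hε₀, hc⟩ := collar H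
  obtain ⟨L, hL⟩ := side_const H hε₀ hc 1 (by simp)
  obtain ⟨R, hR⟩ := side_const H hε₀ hc (-1) (by simp)
  refine ⟨ε₀, hε₀, L, R, ?_, hc, ?_, ?_⟩
  rotate_left
  · intro θ s hs w hw hw2
    simpa using hL θ s hs w ⟨by simpa using hw, hw2⟩
  · intro θ s hs w hw hw2
    simpa using hR θ s hs (-w) ⟨by simpa using hw, by simpa using hw2⟩
  have h0 : (0:ℝ) ∈ Icc (0:ℝ) 1 := ⟨le_rfl, zero_le_one⟩
  set c0 := pdx h (0, 0) with hc0
  have hc0ne : c0 ≠ 0 := H.nz 0 0 h0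
  obtain ⟨ε₁, hε₁, m, hm, hch⟩ := chord H
  have hpc := (smooth_pdx H.sm).continuous
  have hhc := H.sm.continuous
  let g : ℝ → ℂ := fun x => pdx h (x, 0) / c0
  have hg : Continuous g := by simp only [g]; fun_prop
  have hg0 : g 0 = 1 := div_self hc0ne
  obtain ⟨δ₁, hδ₁, hδg⟩ := Metric.continuousAt_iff.1 (hg.continuousAt (x := 0)) (1/4) (by norm_num)
  obtain ⟨M, hM⟩ := (isCompact_Icc (a := -π) (b := π)).exists_bound_of_continuousOn hg.continuousOn
  have hpi := Real.pi_pos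
  have hM0 : 0 ≤ M := (norm_nonneg _).trans (hM 0 ⟨by linarith, by linarith⟩)
  obtain ⟨δ, hδ, hδa, hδb⟩ : ∃ δ > 0, δ ≤ ε₁ ∧ δ ≤ δ₁ :=
    ⟨min ε₁ δ₁, lt_min hε₁ hδ₁, min_le_left _ _, min_le_right _ _⟩
  let C : ℝ := 4 * M / (δ^2 * m^2)
  have hC : 0 ≤ C := by positivity
  obtain ⟨ε, hε, hεa, hεb, hεc, hεd, hεe⟩ : ∃ ε > 0, ε < ε₀ ∧ ε < δ ∧ ε < π ∧ ε < δ * m / 2 ∧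
      ε < 1 / (10 * π * (C + 1)) := by
    have hmm : 0 < min (min ε₀ δ) (min π (min (δ * m / 2) (1 / (10 * π * (C + 1))))) := by positivity
    refine ⟨_, half_pos hmm, ?_⟩
    have := half_lt_self hmm
    simp only [lt_min_iff] at this
    tauto
  have hεcone : (ε : ℂ) ∈ coneC ε₀ := ⟨by simpa [abs_of_pos hε] using hεa, by simpa using hε⟩
  have eL := hL 0 0 h0 ε hεcone
  have eR := hR 0 0 h0 ε hεcone
  have nL : ∀ x, h (x, 0) - (h (0, 0) + I * ε * c0) ≠ 0 := fun x => sub_ne_zero.2 (by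
    simpa using hc 0 x 0 h0 ε (by simpa [abs_of_pos hε] using hεa) (by simpa using hε.ne'))
  have nR : ∀ x, h (x, 0) - (h (0, 0) + I * (-ε) * c0) ≠ 0 := fun x => sub_ne_zero.2 (by
    simpa using hc 0 x 0 h0 (-ε) (by simpa [abs_of_pos hε] using hεa) (by simpa using hε.ne'))
  let T : ℝ → ℂ := fun x => -I * (pdx h (x, 0) / (h (x, 0) - (h (0, 0) + I * ε * c0)) -
      pdx h (x, 0) / (h (x, 0) - (h (0, 0) + I * (-ε) * c0)))
  have hT1 : Continuous fun x : ℝ => pdx h (x, 0) / (h (x, 0) - (h (0, 0) + I * ε * c0)) :=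
    Continuous.div (by fun_prop) (by fun_prop) nL
  have hT2 : Continuous fun x : ℝ => pdx h (x, 0) / (h (x, 0) - (h (0, 0) + I * (-ε) * c0)) :=
    Continuous.div (by fun_prop) (by fun_prop) nR
  have hT : Continuous T := continuous_const.mul (hT1.sub hT2)
  have hLR : ∫ x in (-π)..π, T x = -I * (L - R) := by
    have hper : Function.Periodic T (2 * π) := by
      intro x
      simp only [T, H.per, pdx_per H.sm H.per]
    have := hper.intervalIntegral_add_eq (-π) 0
    rw [show -π + 2 * π = π by ring, zero_add] at this
    rw [this]
    simp only [T]
    rw [intervalIntegral.integral_const_mul, intervalIntegral.integral_sub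
      (hT1.intervalIntegrable _ _) (hT2.intervalIntegrable _ _)]
    rw [← eL, ← eR]
    simp [Cau, one2, hc0]
  have hTE : ∀ x, |x| ≤ π → ∃ E : ℂ, T x = 2 * ε * g x / (x ^ 2 * E ^ 2 + ε ^ 2) ∧ m ≤ ‖E‖ ∧
      (|x| < ε₁ → ‖E - 1‖ < 1/4) := by
    intro x hx
    obtain ⟨E, e1, e2, e3⟩ := hch 0 0 h0 x hx
    refine ⟨E, ?_, e2, e3⟩
    rw [zero_add, ← hc0] at e1
    have a1 : h (x, 0) - (h (0, 0) + I * ε * c0) = c0 * (x * E - I * ε) := by linear_combination e1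
    have a2 : h (x, 0) - (h (0, 0) + I * (-ε) * c0) = c0 * (x * E + I * ε) := by linear_combination e1
    have b1 := nL x
    have b2 := nR x
    rw [a1] at b1
    rw [a2] at b2
    have c1 : (x * E - I * ε : ℂ) ≠ 0 := right_ne_zero_of_mul b1
    have c2 : (x * E + I * ε : ℂ) ≠ 0 := right_ne_zero_of_mul b2
    have c3 : (x ^ 2 * E ^ 2 + ε ^ 2 : ℂ) = (x * E - I * ε) * (x * E + I * ε) := by
      ring_nf; simp
    simp only [T, g]
    rw [a1, a2, c3]
    field_simp
    ring_nf
    simp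
  have hpos : 0 < (∫ x in (-π)..π, T x).re := by
    refine pos_aux hT (c := C * ε) hε hεc (by positivity) ?_ ?_ ?_
    · rw [lt_div_iff₀ (by positivity)] at hεe
      nlinarith [mul_pos hε hpi]
    · intro x hx
      obtain ⟨E, e1, e2, e3⟩ := hTE x hx
      rw [e1]
      by_cases hxd : |x| < δ
      · have hgx : ‖g x - 1‖ < 1/4 := by
          have := hδg (x := x) (by simpa using hxd.trans_le hδb)
          rwa [hg0, dist_eq_norm] at this
        have := (pt_aux (x := x) hε hgx (e3 (hxd.trans_le hδa))).1
        have h5 : 0 ≤ C * ε := by positivity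
        linarith
      · push Not at hxd
        have hn : ‖2 * ε * g x / (x ^ 2 * E ^ 2 + ε ^ 2)‖ ≤ C * ε := by
          have hd : δ^2 * m^2 / 2 ≤ ‖(x ^ 2 * E ^ 2 + ε ^ 2 : ℂ)‖ := by
            have h1 : ‖(x ^ 2 * E ^ 2 : ℂ)‖ ≤ ‖(x ^ 2 * E ^ 2 + ε ^ 2 : ℂ)‖ + ‖(ε^2 : ℂ)‖ := by
              have := norm_sub_le (x ^ 2 * E ^ 2 + ε ^ 2 : ℂ) (ε^2 : ℂ)
              simpa using this
            have h2 : ‖(x ^ 2 * E ^ 2 : ℂ)‖ = (|x| * ‖E‖)^2 := by rw [mul_pow, sq_abs]; simp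
            have h3 : ‖(ε ^ 2 : ℂ)‖ = ε^2 := by simp
            have h4 : δ * m ≤ |x| * ‖E‖ := mul_le_mul hxd e2 hm.le (abs_nonneg _)
            have h5 : (δ * m)^2 ≤ (|x| * ‖E‖)^2 := by gcongr
            have h6 : ε^2 ≤ (δ * m / 2)^2 := by gcongr
            rw [h2, h3] at h1
            nlinarith
          have hgM : ‖g x‖ ≤ M := hM x (abs_le.1 hx)
          rw [norm_div]
          have h7 : ‖(2 * ε * g x : ℂ)‖ ≤ 2 * ε * M := by
            simp [abs_of_pos hε]; gcongr
          calc _ ≤ 2 * ε * M / (δ^2 * m^2 / 2) := by gcongr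
            _ = C * ε := by simp only [C]; field_simp; ring
        have := (abs_le.1 ((Complex.abs_re_le_norm _).trans hn)).1
        linarith
    · intro x hx
      obtain ⟨E, e1, e2, e3⟩ := hTE x (hx.trans hεc.le)
      rw [e1]
      have hxd := hx.trans_lt hεb
      have hgx : ‖g x - 1‖ < 1/4 := by
        have := hδg (x := x) (by simpa using hxd.trans_le hδb)
        rwa [hg0, dist_eq_norm] at this
      exact (pt_aux (x := x) hε hgx (e3 (hxd.trans_le hδa))).2 hx
  intro heq
  rw [hLR, heq] at hpos
  simp at hpos

def Compat (g h : ℝ × ℝ → ℂ) : Prop :=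
  ∀ θ : ℝ, ∀ t ∈ Icc (0:ℝ) 1, pdt g (θ, t) * pdx h (θ, t) = pdx g (θ, t) * pdt h (θ, t)

theorem Compat.self (h : ℝ × ℝ → ℂ) : Compat h h := fun θ t _ => by ring

theorem Compat.one (h : ℝ × ℝ → ℂ) : Compat one2 h := fun θ t _ => by
  have : fderiv ℝ one2 (θ, t) = 0 := by
    have : one2 = fun _ => (1:ℂ) := rfl
    rw [this]; simp
  simp [pdt, pdx, this]

theorem Cau_const {g h : ℝ × ℝ → ℂ} (hg : ContDiff ℝ (⊤ : ℕ∞) g) (hh : ContDiff ℝ (⊤ : ℕ∞) h)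
    (pg : ∀ θ t, g (θ + 2 * π, t) = g (θ, t)) (ph : ∀ θ t, h (θ + 2 * π, t) = h (θ, t))
    (hc : Compat g h) {p : ℂ} {s₁ s₂ : ℝ} (h01 : 0 ≤ s₁) (h12 : s₁ ≤ s₂) (h21 : s₂ ≤ 1)
    (hn : ∀ s ∈ Icc s₁ s₂, ∀ x, h (x, s) ≠ p) : Cau g h p s₁ = Cau g h p s₂ := by
  let F : ℝ × ℝ → ℂ := fun z => -(g z * pdt h z / (h z - p))
  let G : ℝ × ℝ → ℂ := fun z => g z * pdx h z / (h z - p)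
  have hnz : ∀ x, ∀ s ∈ Icc s₁ s₂, h (x, s) - p ≠ 0 := fun x s hs => sub_ne_zero.2 (hn s hs x)
  have hF : ∀ x, ∀ s ∈ Icc s₁ s₂, DifferentiableAt ℝ F (x, s) := by
    intro x s hs
    simp only [F, div_eq_mul_inv]
    exact (((smooth_diff hg _).mul (smooth_diff (smooth_pdt hh) _)).mul
      (((smooth_diff hh _).sub_const p).inv (hnz x s hs))).neg
  have hG : ∀ x, ∀ s ∈ Icc s₁ s₂, DifferentiableAt ℝ G (x, s) := by
    intro x s hs
    simp only [G, div_eq_mul_inv]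
    exact (((smooth_diff hg _).mul (smooth_diff (smooth_pdx hh) _)).mul
      (((smooth_diff hh _).sub_const p).inv (hnz x s hs)))
  have hdiv : ∀ z ∈ univ ×ˢ Icc s₁ s₂, fderiv ℝ F z (1, 0) + fderiv ℝ G z (0, 1) = 0 := by
    rintro ⟨x, s⟩ ⟨-, hs⟩
    have hs : s ∈ Icc s₁ s₂ := hs
    have h0 := hnz x s hs
    have a1 := (hF x s hs).hasFDerivAt.comp_hasDerivAt x ((hasDerivAt_id x).prodMk (hasDerivAt_const x s))
    have a2 := (((hasDerivAt_x hg x s).mul (hasDerivAt_x (smooth_pdt hh) x s)).div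
      ((hasDerivAt_x hh x s).sub_const p) h0).neg
    have b1 := (hG x s hs).hasFDerivAt.comp_hasDerivAt s ((hasDerivAt_const s x).prodMk (hasDerivAt_id s))
    have b2 := (((hasDerivAt_t hg x s).mul (hasDerivAt_t (smooth_pdx hh) x s)).div
      ((hasDerivAt_t hh x s).sub_const p) h0)
    have a3 := a1.unique a2
    have b3 := b1.unique b2
    simp only [Pi.mul_apply] at a3 b3
    rw [a3, b3, pd_symm hh]
    have := hc x s ⟨h01.trans hs.1, hs.2.trans h21⟩
    field_simp
    linear_combination (h (x, s) - p) * this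
  have hu : uIcc s₁ s₂ = Icc s₁ s₂ := uIcc_of_le h12
  have hsub : uIcc 0 (2 * π) ×ˢ uIcc s₁ s₂ ⊆ univ ×ˢ Icc s₁ s₂ := by
    rw [hu]; exact prod_mono (subset_univ _) subset_rfl
  have hsub2 : Ioo (min 0 (2 * π)) (max 0 (2 * π)) ×ˢ Ioo (min s₁ s₂) (max s₁ s₂) ⊆ univ ×ˢ Icc s₁ s₂ := by
    rw [min_eq_left h12, max_eq_right h12]; exact prod_mono (subset_univ _) Ioo_subset_Icc_self
  have key := MeasureTheory.integral2_divergence_prod_of_hasFDerivAt F G (fderiv ℝ F) (fderiv ℝ G)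
    0 s₁ (2 * π) s₂
    (fun z hz => (hF z.1 z.2 (hsub hz).2).continuousAt.continuousWithinAt)
    (fun z hz => (hG z.1 z.2 (hsub hz).2).continuousAt.continuousWithinAt)
    (fun z hz => (hF z.1 z.2 (hsub2 hz).2).hasFDerivAt)
    (fun z hz => (hG z.1 z.2 (hsub2 hz).2).hasFDerivAt)
    (by
      refine (MeasureTheory.integrableOn_congr_fun (fun z hz => hdiv z (hsub hz)) ?_).2 ?_
      · exact (measurableSet_uIcc.prod measurableSet_uIcc)
      · exact MeasureTheory.integrableOn_zero)
  have e0 : (∫ x in (0:ℝ)..(2 * π), ∫ y in s₁..s₂, fderiv ℝ F (x, y) (1, 0) + fderiv ℝ G (x, y) (0, 1)) = 0 := by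
    have : ∀ x : ℝ, ∫ y in s₁..s₂, fderiv ℝ F (x, y) (1, 0) + fderiv ℝ G (x, y) (0, 1) = 0 := by
      intro x
      rw [intervalIntegral.integral_congr (g := fun _ => 0)]
      · simp
      · intro y hy
        rw [hu] at hy
        exact hdiv (x, y) ⟨trivial, hy⟩
    simp only [this]
    simp
  have eF : ∀ y, F (2 * π, y) = F (0, y) := by
    intro y
    have e1 := pg 0 y
    have e2 := ph 0 y
    have e3 := pdt_per hh ph 0 y
    rw [zero_add] at e1 e2 e3
    simp only [F, e1, e2, e3]
  rw [e0] at key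
  simp only [eF] at key
  simp only [Cau]
  simp only [G] at key
  linear_combination key

theorem local_flow {g h : ℝ × ℝ → ℂ} (H : FD h) (hg : ContDiff ℝ (⊤ : ℕ∞) g) (hc : Compat g h)
    {ε : ℝ} (hε : 0 < ε) (α a : ℝ) (ha : a ∈ Icc (0:ℝ) 1) :
    ∃ δ > (0:ℝ), ∀ s ∈ Icc (0:ℝ) 1, |s - a| < δ → ∃ x : ℝ, ∃ w : ℂ,
      h (α, a) = h (x, s) + I * w * pdx h (x, s) ∧ ‖w‖ < ε ∧
      ((w = 0 ∧ g (x, s) = g (α, a)) ∨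
        (|w.im| < |w.re| ∧ (a < s → 0 < w.re) ∧ (s < a → w.re < 0))) ∧
      ((pdt h (α, a) / pdx h (α, a)).im ≠ 0 → s ≠ a → w ≠ 0) := by
  obtain ⟨φ, hφa, hφ⟩ := flow_exists H α a ha
  let m : ℝ → ℂ := fun s => pdx h (φ s, s)
  let Y : ℝ → ℝ := fun s => -(pdt h (φ s, s) / pdx h (φ s, s)).im
  have hφca : ContinuousAt φ a := hφ.self_of_nhds.continuousAt
  have hmc : ContinuousAt m a :=
    ((smooth_pdx H.sm).continuous.continuousAt).comp (hφca.prodMk continuousAt_id)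
  have hma : m a ≠ 0 := H.nz _ a ha
  have e1 : ∀ᶠ s in 𝓝 a, ‖(h (α, a) - h (φ s, s)) / (I * m s)‖ < ε := by
    have : ContinuousAt (fun s => ‖(h (α, a) - h (φ s, s)) / (I * m s)‖) a := by
      apply ContinuousAt.norm
      apply ContinuousAt.div
      · exact continuousAt_const.sub ((H.sm.continuous.continuousAt).comp (hφca.prodMk continuousAt_id))
      · exact continuousAt_const.mul hmc
      · exact mul_ne_zero I_ne_zero hma
    apply this.eventually_lt continuousAt_const
    simpa [hφa] using hε
  have e2 : ∀ᶠ q : ℝ × ℝ in 𝓝 (a, a), ‖m q.1 / m q.2 - 1‖ < 1/4 := by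
    have : ContinuousAt (fun q : ℝ × ℝ => ‖m q.1 / m q.2 - 1‖) (a, a) := by
      apply ContinuousAt.norm
      apply ContinuousAt.sub _ continuousAt_const
      apply ContinuousAt.div
      · exact ContinuousAt.comp (f := fun q : ℝ × ℝ => q.1) (x := (a, a)) hmc continuousAt_fst
      · exact ContinuousAt.comp (f := fun q : ℝ × ℝ => q.2) (x := (a, a)) hmc continuousAt_snd
      · exact hma
    apply this.eventually_lt continuousAt_const
    simp [div_self hma]
  obtain ⟨δ₁, hδ₁, h1⟩ := Metric.eventually_nhds_iff.1 (hφ.and e1)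
  obtain ⟨δ₂, hδ₂, h2⟩ := Metric.eventually_nhds_iff.1 e2
  refine ⟨min δ₁ δ₂, lt_min hδ₁ hδ₂, ?_⟩
  intro s hs hsa
  have hsub : ∀ r ∈ uIcc a s, r ∈ Icc (0:ℝ) 1 ∧ |r - a| < min δ₁ δ₂ := by
    intro r hr
    refine ⟨(convex_Icc (0:ℝ) 1).ordConnected.uIcc_subset ha hs hr, lt_of_le_of_lt ?_ hsa⟩
    exact abs_sub_left_of_mem_uIcc hr
  have hd : ∀ r ∈ uIcc a s, HasDerivAt φ (-(pdt h (φ r, r) / pdx h (φ r, r))).re r :=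
    fun r hr => (h1 (lt_of_lt_of_le (hsub r hr).2 (min_le_left _ _))).1
  have hφc : ContinuousOn φ (uIcc a s) := fun r hr => (hd r hr).continuousAt.continuousWithinAt
  have hpc : ContinuousOn (fun r => (φ r, r)) (uIcc a s) := hφc.prodMk continuousOn_id
  have hnz : ∀ r ∈ uIcc a s, m r ≠ 0 := fun r hr => H.nz _ r (hsub r hr).1
  have hmco : ContinuousOn m (uIcc a s) := (smooth_pdx H.sm).continuous.comp_continuousOn hpc
  have hYc : ContinuousOn Y (uIcc a s) := by
    apply ContinuousOn.neg
    apply Complex.continuous_im.comp_continuousOn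
    exact ((smooth_pdt H.sm).continuous.comp_continuousOn hpc).div hmco hnz
  have hY0 : ∀ r ∈ uIcc a s, 0 ≤ Y r := fun r hr => by
    have := H.inw (φ r) r (hsub r hr).1
    simp only [Y]; linarith
  -- derivative formula
  have hder : ∀ k : ℝ × ℝ → ℂ, ContDiff ℝ (⊤ : ℕ∞) k → Compat k h →
      k (φ s, s) - k (α, a) = ∫ r in a..s, -I * (Y r * pdx k (φ r, r)) := by
    intro k hk hkc
    have h3 : ∀ r ∈ uIcc a s, HasDerivAt (fun r => k (φ r, r)) (-I * (Y r * pdx k (φ r, r))) r := by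
      intro r hr
      have h4 := hasDerivAt_path hk (hd r hr) (hasDerivAt_id r)
      have h5 := hkc (φ r) r (hsub r hr).1
      have h6 : pdt k (φ r, r) = pdx k (φ r, r) * (pdt h (φ r, r) / pdx h (φ r, r)) := by
        have := hnz r hr
        simp only [m] at this
        field_simp
        exact h5
      have e : ((-(pdt h (φ r, r) / pdx h (φ r, r))).re : ℂ) * pdx k (φ r, r) +
          ((1:ℝ) : ℂ) * pdt k (φ r, r) = -I * (Y r * pdx k (φ r, r)) := by
        rw [h6]
        have hq := (Complex.re_add_im (pdt h (φ r, r) / pdx h (φ r, r))).symm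
        simp only [Y]
        rw [Complex.neg_re]
        push_cast
        linear_combination pdx k (φ r, r) * hq
      simp only [id] at h4
      rw [e] at h4
      exact h4
    have h4 := intervalIntegral.integral_eq_sub_of_hasDerivAt h3 (by
      apply ContinuousOn.intervalIntegrable
      apply continuousOn_const.mul
      exact (Complex.continuous_ofReal.comp_continuousOn hYc).mul
        ((smooth_pdx hk).continuous.comp_continuousOn hpc))
    rw [h4, hφa]
  let w : ℂ := (h (α, a) - h (φ s, s)) / (I * m s)
  have hss : s ∈ uIcc a s := right_mem_uIcc
  have hms := hnz s hss
  let E : ℝ := ∫ r in a..s, Y r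
  have hYi : IntervalIntegrable Y MeasureTheory.volume a s := hYc.intervalIntegrable
  have hw : w = ∫ r in a..s, Y r * (m r / m s) := by
    have h3 := hder h H.sm (Compat.self h)
    have h4 : h (α, a) - h (φ s, s) = ∫ r in a..s, I * (Y r * pdx h (φ r, r)) := by
      rw [← neg_sub, h3, ← intervalIntegral.integral_neg]
      congr 1; ext r; ring
    simp only [w]
    rw [h4, ← intervalIntegral.integral_div]
    congr 1; ext r
    have := I_ne_zero
    simp only [m]
    simp only [m] at hms
    field_simp
  have hwE : ‖w - E‖ ≤ |E| / 4 := by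
    have h3 : w - E = ∫ r in a..s, Y r * (m r / m s - 1) := by
      rw [hw, ← intervalIntegral.integral_ofReal, ← intervalIntegral.integral_sub]
      · congr 1; ext r; ring
      · apply ContinuousOn.intervalIntegrable
        exact (Complex.continuous_ofReal.comp_continuousOn hYc).mul (hmco.div_const _)
      · apply ContinuousOn.intervalIntegrable
        exact (Complex.continuous_ofReal.comp_continuousOn hYc)
    rw [h3]
    have h4 : |E| / 4 = |∫ r in a..s, Y r * (1/4)| := by
      rw [intervalIntegral.integral_mul_const, abs_mul]; norm_num [E]; ring
    rw [h4]
    apply intervalIntegral.norm_integral_le_abs_of_norm_le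
    · filter_upwards [MeasureTheory.ae_restrict_mem measurableSet_uIoc] with r hr
      have hr' := uIoc_subset_uIcc hr
      rw [norm_mul, Complex.norm_real, Real.norm_of_nonneg (hY0 r hr')]
      apply mul_le_mul_of_nonneg_left _ (hY0 r hr')
      refine (h2 (y := (r, s)) ?_).le
      rw [Prod.dist_eq]
      exact max_lt (lt_of_lt_of_le (hsub r hr').2 (min_le_right _ _)) (lt_of_lt_of_le hsa (min_le_right _ _))
    · exact hYi.mul_const _
  have hEpos : a < s → 0 ≤ E := fun has => intervalIntegral.integral_nonneg has.le
    (fun r hr => hY0 r (by rwa [uIcc_of_le has.le]))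
  have hEneg : s < a → E ≤ 0 := fun has => by
    simp only [E]
    rw [intervalIntegral.integral_symm]
    have := intervalIntegral.integral_nonneg (μ := MeasureTheory.volume) has.le
      (fun r hr => hY0 r (by rwa [uIcc_of_ge has.le]))
    linarith
  have hEnz : (pdt h (α, a) / pdx h (α, a)).im ≠ 0 → s ≠ a → E ≠ 0 := by
    intro hne hsne
    have hYa : 0 < Y a := by
      have h3 := hY0 a left_mem_uIcc
      refine lt_of_le_of_ne h3 ?_
      simp only [Y, hφa]
      intro h4
      apply hne; linarith
    rcases lt_or_gt_of_ne hsne with hlt | hgt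
    · have : 0 < ∫ r in s..a, Y r := by
        rw [uIcc_of_ge hlt.le] at hYc hY0
        exact intervalIntegral.integral_pos hlt hYc (fun r hr => hY0 r ⟨hr.1.le, hr.2⟩)
          ⟨a, ⟨hlt.le, le_rfl⟩, hYa⟩
      simp only [E]
      rw [intervalIntegral.integral_symm]
      linarith
    · have : 0 < ∫ r in a..s, Y r := by
        rw [uIcc_of_le (le_of_lt hgt)] at hYc hY0
        exact intervalIntegral.integral_pos hgt hYc (fun r hr => hY0 r ⟨hr.1.le, hr.2⟩)
          ⟨a, ⟨le_rfl, le_of_lt hgt⟩, hYa⟩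
      exact this.ne'
  refine ⟨φ s, w, ?_, (h1 (lt_of_lt_of_le hsa (min_le_left _ _))).2, ?_, ?_⟩
  · simp only [w]
    have := I_ne_zero
    simp only [m] at hms ⊢
    field_simp
    ring
  · by_cases hE : E = 0
    · left
      rw [hE] at hwE
      simp at hwE
      refine ⟨hwE, ?_⟩
      have h3 := hder g hg hc
      have hgc : ContinuousOn (fun r => pdx g (φ r, r)) (uIcc a s) :=
        (smooth_pdx hg).continuous.comp_continuousOn hpc
      obtain ⟨C, hC⟩ := isCompact_uIcc.exists_bound_of_continuousOn hgc
      have h4 : ‖g (φ s, s) - g (α, a)‖ ≤ |∫ r in a..s, Y r * C| := by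
        rw [h3]
        apply intervalIntegral.norm_integral_le_abs_of_norm_le
        · filter_upwards [MeasureTheory.ae_restrict_mem measurableSet_uIoc] with r hr
          have hr' := uIoc_subset_uIcc hr
          rw [norm_mul, norm_mul, Complex.norm_real, Real.norm_of_nonneg (hY0 r hr')]
          simp only [norm_neg, norm_I, one_mul]
          exact mul_le_mul_of_nonneg_left (hC r hr') (hY0 r hr')
        · exact hYi.mul_const _
      rw [intervalIntegral.integral_mul_const] at h4
      simp only [E] at hE
      rw [hE] at h4
      simp at h4
      exact sub_eq_zero.1 h4
    · right
      have r1 := (Complex.abs_re_le_norm _).trans hwE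
      have r2 := (Complex.abs_im_le_norm _).trans hwE
      simp only [Complex.sub_re, Complex.sub_im, Complex.ofReal_re, Complex.ofReal_im, sub_zero] at r1 r2
      have hEa := abs_pos.2 hE
      have r3 := abs_le.1 r1
      refine ⟨?_, ?_, ?_⟩
      · have : |E| ≤ |w.re| + |E|/4 := by
          have := abs_sub_abs_le_abs_sub E w.re
          rw [abs_sub_comm] at this
          linarith
        linarith
      · intro has
        have := lt_of_le_of_ne (hEpos has) (Ne.symm hE)
        rw [abs_of_pos this] at r3
        linarith
      · intro has
        have := lt_of_le_of_ne (hEneg has) hE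
        rw [abs_of_neg this] at r3
        linarith
  · intro hne hsne hw0
    have := hEnz hne hsne
    rw [hw0] at hwE
    simp at hwE
    have := abs_pos.2 this
    linarith

def OnC (h : ℝ × ℝ → ℂ) (p : ℂ) (s : ℝ) : Prop := ∃ x, h (x, s) = p

structure Sides (h : ℝ × ℝ → ℂ) (ε : ℝ) (L R : ℂ) : Prop where
  pos : 0 < ε
  ne : L ≠ R
  col : ∀ θ x : ℝ, ∀ s ∈ Icc (0:ℝ) 1, ∀ w : ℂ,
      ‖w‖ < ε → |w.im| < |w.re| → h (x, s) ≠ h (θ, s) + I * w * pdx h (θ, s)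
  left : ∀ θ : ℝ, ∀ s ∈ Icc (0:ℝ) 1, ∀ w : ℂ, ‖w‖ < ε → |w.im| < w.re →
      Cau one2 h (h (θ, s) + I * w * pdx h (θ, s)) s = L
  right : ∀ θ : ℝ, ∀ s ∈ Icc (0:ℝ) 1, ∀ w : ℂ, ‖w‖ < ε → |w.im| < -w.re →
      Cau one2 h (h (θ, s) + I * w * pdx h (θ, s)) s = R

theorem one2_smooth : ContDiff ℝ (⊤ : ℕ∞) one2 := contDiff_const

theorem after_L {h : ℝ × ℝ → ℂ} (H : FD h) {ε : ℝ} {L R : ℂ} (S : Sides h ε L R) (α a : ℝ)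
    (ha : a ∈ Icc (0:ℝ) 1) : ∃ δ > (0:ℝ), ∀ s ∈ Icc (0:ℝ) 1, a < s → s < a + δ →
    ¬ OnC h (h (α, a)) s → Cau one2 h (h (α, a)) s = L := by
  obtain ⟨δ, hδ, hf⟩ := local_flow H H.sm (Compat.self h) S.pos α a ha
  refine ⟨δ, hδ, ?_⟩
  intro s hs h1 h2 h3
  obtain ⟨x, w, hw, hwε, hc, -⟩ := hf s hs (by rw [abs_of_pos (by linarith)]; linarith)
  rcases hc with ⟨rfl, -⟩ | ⟨h4, h5, -⟩
  · exact absurd ⟨x, by rw [hw]; simp⟩ h3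
  · rw [hw]
    have := h5 h1
    rw [abs_of_pos this] at h4
    exact S.left x s hs w hwε h4

theorem before_R {h : ℝ × ℝ → ℂ} (H : FD h) {ε : ℝ} {L R : ℂ} (S : Sides h ε L R) (α a : ℝ)
    (ha : a ∈ Icc (0:ℝ) 1) : ∃ δ > (0:ℝ), ∀ s ∈ Icc (0:ℝ) 1, s < a → a - δ < s →
    ¬ OnC h (h (α, a)) s → Cau one2 h (h (α, a)) s = R := by
  obtain ⟨δ, hδ, hf⟩ := local_flow H H.sm (Compat.self h) S.pos α a ha
  refine ⟨δ, hδ, ?_⟩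
  intro s hs h1 h2 h3
  obtain ⟨x, w, hw, hwε, hc, -⟩ := hf s hs (by rw [abs_of_neg (by linarith)]; linarith)
  rcases hc with ⟨rfl, -⟩ | ⟨h4, -, h5⟩
  · exact absurd ⟨x, by rw [hw]; simp⟩ h3
  · rw [hw]
    have := h5 h1
    rw [abs_of_neg this] at h4
    exact S.right x s hs w hwε h4

theorem exists_mod {h : ℝ × ℝ → ℂ} (hp : ∀ θ t, h (θ + 2 * π, t) = h (θ, t)) (x t : ℝ) :
    ∃ y ∈ Icc (0:ℝ) (2 * π), ∃ k : ℤ, y = x + k * (2 * π) := by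
  have hpi : (0:ℝ) < 2 * π := by positivity
  obtain ⟨k, hk, -⟩ := existsUnique_add_zsmul_mem_Ico hpi x 0
  refine ⟨x + k * (2 * π), ?_, k, rfl⟩
  simp at hk
  exact ⟨hk.1, hk.2.le⟩

theorem onC_compact {h : ℝ × ℝ → ℂ} (H : FD h) (p : ℂ) (u v : ℝ) :
    IsCompact {r | r ∈ Icc u v ∧ OnC h p r} := by
  have : {r | r ∈ Icc u v ∧ OnC h p r} =
      Prod.snd '' ((Icc (0:ℝ) (2 * π) ×ˢ Icc u v) ∩ h ⁻¹' {p}) := by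
    ext r
    constructor
    · rintro ⟨hr, x, hx⟩
      obtain ⟨y, hy, k, hk⟩ := exists_mod H.per x r
      refine ⟨(y, r), ⟨⟨hy, hr⟩, ?_⟩, rfl⟩
      simp only [mem_preimage, mem_singleton_iff]
      rw [hk, FD.per_int H.per, hx]
    · rintro ⟨⟨x, r'⟩, ⟨⟨h1, h2⟩, h3⟩, rfl⟩
      exact ⟨h2, x, h3⟩
  rw [this]
  apply IsCompact.image _ continuous_snd
  exact (isCompact_Icc.prod isCompact_Icc).inter_right (isClosed_singleton.preimage H.sm.continuous)

theorem no_gap {h : ℝ × ℝ → ℂ} (H : FD h) {a b : ℝ} (ha : 0 ≤ a) (hab : a < b) (hb : b ≤ 1) {p : ℂ}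
    (h1 : OnC h p a) (h2 : OnC h p b) : ∃ r ∈ Ioo a b, OnC h p r := by
  by_contra hcon
  push Not at hcon
  obtain ⟨ε, hε, L, R, hLR, c1, c2, c3⟩ := sides H
  have S : Sides h ε L R := ⟨hε, hLR, c1, c2, c3⟩
  obtain ⟨α, rfl⟩ := h1
  obtain ⟨β, hβ⟩ := h2
  obtain ⟨δ₁, hδ₁, f1⟩ := after_L H S α a ⟨ha, by linarith⟩
  obtain ⟨δ₂, hδ₂, f2⟩ := before_R H S β b ⟨by linarith, hb⟩
  rw [hβ] at f2
  set d := min (min δ₁ δ₂) (b - a) / 3 with hd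
  have hm : 0 < min (min δ₁ δ₂) (b - a) := lt_min (lt_min hδ₁ hδ₂) (by linarith)
  have hdp : 0 < d := by positivity
  have m1 : min (min δ₁ δ₂) (b - a) ≤ δ₁ := (min_le_left _ _).trans (min_le_left _ _)
  have m2 : min (min δ₁ δ₂) (b - a) ≤ δ₂ := (min_le_left _ _).trans (min_le_right _ _)
  have m3 : min (min δ₁ δ₂) (b - a) ≤ b - a := min_le_right _ _
  have g1 := f1 (a + d) ⟨by linarith, by linarith⟩ (by linarith) (by linarith)
    (hcon _ ⟨by linarith, by linarith⟩)
  have g2 := f2 (b - d) ⟨by linarith, by linarith⟩ (by linarith) (by linarith)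
    (hcon _ ⟨by linarith, by linarith⟩)
  have g3 := Cau_const one2_smooth H.sm (fun _ _ => rfl) H.per (Compat.one h) (p := h (α, a))
    (s₁ := a + d) (s₂ := b - d) (by linarith) (by linarith) (by linarith)
    (fun s hs x hx => hcon s ⟨by linarith [hs.1], by linarith [hs.2]⟩ ⟨x, hx⟩)
  exact hLR (by rw [← g1, ← g2, g3])

theorem onC_interval {h : ℝ × ℝ → ℂ} (H : FD h) {t₀ t₁ : ℝ} (h0 : 0 ≤ t₀) (h1 : t₁ ≤ 1) {p : ℂ}
    (p0 : OnC h p t₀) (p1 : OnC h p t₁) {s : ℝ} (hs : s ∈ Icc t₀ t₁) : OnC h p s := by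
  by_contra hcon
  obtain ⟨a, ⟨ha1, ha2⟩, ha3⟩ := (onC_compact H p t₀ s).exists_isGreatest ⟨t₀, ⟨le_rfl, hs.1⟩, p0⟩
  obtain ⟨b, ⟨hb1, hb2⟩, hb3⟩ := (onC_compact H p s t₁).exists_isLeast ⟨t₁, ⟨hs.2, le_rfl⟩, p1⟩
  have has : a < s := lt_of_le_of_ne ha1.2 (by rintro rfl; exact hcon ha2)
  have hsb : s < b := lt_of_le_of_ne hb1.1 (by rintro rfl; exact hcon hb2)
  obtain ⟨r, hr, hr2⟩ := no_gap H (by linarith [ha1.1]) (has.trans hsb) (by linarith [hb1.2]) ha2 hb2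
  rcases le_total r s with hrs | hrs
  · exact absurd (ha3 ⟨⟨by linarith [ha1.1, hr.1], hrs⟩, hr2⟩) (by linarith [hr.1])
  · exact absurd (hb3 ⟨⟨hrs, by linarith [hb1.2, hr.2]⟩, hr2⟩) (by linarith [hr.2])

theorem eq_of_onC {g h : ℝ × ℝ → ℂ} (H : FD h) (pg : ∀ θ t, g (θ + 2 * π, t) = g (θ, t))
    {x y s : ℝ} (hs : s ∈ Icc (0:ℝ) 1) (e : h (x, s) = h (y, s)) : g (x, s) = g (y, s) := by
  obtain ⟨k, rfl⟩ := H.inj_mod hs e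
  rw [FD.per_int pg]

theorem well_defined_aux {g h : ℝ × ℝ → ℂ} (H : FD h) (hg : ContDiff ℝ (⊤ : ℕ∞) g)
    (pg : ∀ θ t, g (θ + 2 * π, t) = g (θ, t)) (hc : Compat g h) {θ₀ t₀ θ₁ t₁ : ℝ}
    (h0 : 0 ≤ t₀) (h01 : t₀ ≤ t₁) (h1 : t₁ ≤ 1) (e : h (θ₀, t₀) = h (θ₁, t₁)) :
    g (θ₀, t₀) = g (θ₁, t₁) := by
  have hon : ∀ s ∈ Icc t₀ t₁, ∃ x, h (x, s) = h (θ₀, t₀) :=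
    fun s hs => onC_interval H h0 h1 ⟨θ₀, rfl⟩ ⟨θ₁, e.symm⟩ hs
  obtain ⟨ε, hε, hcol⟩ := collar H
  choose! f hf using hon
  have hsub : ∀ s ∈ Icc t₀ t₁, s ∈ Icc (0:ℝ) 1 := fun s hs => ⟨h0.trans hs.1, hs.2.trans h1⟩
  have hloc : ∀ a ∈ Icc t₀ t₁, ∀ᶠ s in 𝓝[Icc t₀ t₁] a, g (f a, a) = g (f s, s) := by
    intro a ha
    obtain ⟨δ, hδ, hfl⟩ := local_flow H hg hc hε (f a) a (hsub a ha)
    filter_upwards [self_mem_nhdsWithin, mem_nhdsWithin_of_mem_nhds (Metric.ball_mem_nhds a hδ)] with s hs hsa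
    obtain ⟨x, w, hw, hwε, hcc, -⟩ := hfl s (hsub s hs) hsa
    rcases hcc with ⟨rfl, h4⟩ | ⟨h4, -⟩
    · rw [← h4]
      apply eq_of_onC H pg (hsub s hs)
      rw [hf s hs, ← hf a ha, hw]; simp
    · exact absurd (by rw [hf s hs, ← hf a ha, hw]) (hcol x (f s) s (hsub s hs) w hwε h4)
  have key := isPreconnected_Icc.induction₂ (fun a b => g (f a, a) = g (f b, b)) hloc
    (fun _ _ _ _ _ _ => Eq.trans) (fun _ _ _ _ => Eq.symm)
    (left_mem_Icc.2 h01) (right_mem_Icc.2 h01)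
  have m0 := left_mem_Icc.2 h01
  have m1 := right_mem_Icc.2 h01
  rw [← eq_of_onC H pg (hsub _ m0) (hf _ m0), key]
  exact eq_of_onC H pg (hsub _ m1) ((hf _ m1).trans e)

theorem well_defined {g h : ℝ × ℝ → ℂ} (H : FD h) (hg : ContDiff ℝ (⊤ : ℕ∞) g)
    (pg : ∀ θ t, g (θ + 2 * π, t) = g (θ, t)) (hc : Compat g h) {θ₀ t₀ θ₁ t₁ : ℝ}
    (h0 : t₀ ∈ Icc (0:ℝ) 1) (h1 : t₁ ∈ Icc (0:ℝ) 1) (e : h (θ₀, t₀) = h (θ₁, t₁)) :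
    g (θ₀, t₀) = g (θ₁, t₁) := by
  rcases le_total t₀ t₁ with hle | hle
  · exact well_defined_aux H hg pg hc h0.1 hle h1.2 e
  · exact (well_defined_aux H hg pg hc h1.1 hle h0.2 e.symm).symm

theorem not_interior {h : ℝ × ℝ → ℂ} (θ s σ ε : ℝ) (hε : 0 < ε) (hσ : |σ| = 1) (A : Set ℂ)
    (hn : ∀ r : ℝ, 0 < r → r < ε → h (θ, s) + I * (σ * r : ℝ) * pdx h (θ, s) ∉ A) :
    h (θ, s) ∉ interior A := by
  intro hmem
  have hc : ContinuousAt (fun r : ℝ => h (θ, s) + I * (σ * r : ℝ) * pdx h (θ, s)) 0 := by fun_prop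
  have h1 : ∀ᶠ r in 𝓝 (0:ℝ), h (θ, s) + I * (σ * r : ℝ) * pdx h (θ, s) ∈ A := by
    apply hc
    simpa using mem_interior_iff_mem_nhds.1 hmem
  have h2 : ∀ᶠ r in 𝓝[>] (0:ℝ), h (θ, s) + I * (σ * r : ℝ) * pdx h (θ, s) ∈ A := h1.filter_mono nhdsWithin_le_nhds
  obtain ⟨r, hr, hr2⟩ := (h2.and (Ioo_mem_nhdsGT hε)).exists
  exact hn r hr2.1 hr2.2 hr

theorem bdry0 {h : ℝ × ℝ → ℂ} (H : FD h) (θ : ℝ) :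
    h (θ, 0) ∉ interior (h '' (univ ×ˢ Icc (0:ℝ) 1)) := by
  obtain ⟨ε, hε, L, R, hLR, c1, c2, c3⟩ := sides H
  have S : Sides h ε L R := ⟨hε, hLR, c1, c2, c3⟩
  have m0 : (0:ℝ) ∈ Icc (0:ℝ) 1 := by simp
  apply not_interior θ 0 1 ε hε (by simp)
  rintro r hr hrε ⟨⟨x, t⟩, ⟨-, ht⟩, hx⟩
  have k1 : ‖((1 * r : ℝ) : ℂ)‖ < ε := by rw [Complex.norm_real, Real.norm_of_nonneg] <;> linarith
  have e1 := c2 θ 0 m0 ((1 * r : ℝ) : ℂ) k1 (by simpa using hr)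
  have e2 := fun x => c1 θ x 0 m0 ((1 * r : ℝ) : ℂ) k1 (by simpa using hr.ne')
  set p := h (θ, 0) + I * (1 * r : ℝ) * pdx h (θ, 0)
  obtain ⟨b, ⟨hb1, hb2⟩, hb3⟩ := (onC_compact H p 0 1).exists_isLeast ⟨t, ht, x, hx⟩
  have hb0 : 0 < b := lt_of_le_of_ne hb1.1 (by rintro rfl; obtain ⟨y, hy⟩ := hb2; exact e2 y hy)
  obtain ⟨y, hy⟩ := hb2
  obtain ⟨δ, hδ, f⟩ := before_R H S y b hb1
  rw [hy] at f
  set d := min δ b / 2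
  have hm : 0 < min δ b := lt_min hδ hb0
  have l1 : min δ b ≤ δ := min_le_left _ _
  have l2 : min δ b ≤ b := min_le_right _ _
  have hd : d = min δ b / 2 := rfl
  have hno : ∀ s ∈ Icc 0 (b - d), ∀ x, h (x, s) ≠ p := by
    intro s hs x hx
    have := hb3 ⟨⟨hs.1, by linarith [hs.2, hb1.2]⟩, x, hx⟩
    linarith [hs.2]
  have g2 := f (b - d) ⟨by linarith, by linarith [hb1.2]⟩ (by linarith) (by linarith)
    (fun ⟨x, hx⟩ => hno _ ⟨by linarith, le_rfl⟩ x hx)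
  have g3 := Cau_const one2_smooth H.sm (fun _ _ => rfl) H.per (Compat.one h) (p := p)
    (s₁ := 0) (s₂ := b - d) le_rfl (by linarith) (by linarith [hb1.2]) hno
  exact hLR (by rw [← e1, ← g2, g3])

theorem bdry1 {h : ℝ × ℝ → ℂ} (H : FD h) (θ : ℝ) :
    h (θ, 1) ∉ interior (h '' (univ ×ˢ Icc (0:ℝ) 1)) := by
  obtain ⟨ε, hε, L, R, hLR, c1, c2, c3⟩ := sides H
  have S : Sides h ε L R := ⟨hε, hLR, c1, c2, c3⟩
  have m0 : (1:ℝ) ∈ Icc (0:ℝ) 1 := by simp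
  apply not_interior θ 1 (-1) ε hε (by simp)
  rintro r hr hrε ⟨⟨x, t⟩, ⟨-, ht⟩, hx⟩
  have k1 : ‖((-1 * r : ℝ) : ℂ)‖ < ε := by
    rw [Complex.norm_real, Real.norm_of_nonpos] <;> linarith
  have e1 := c3 θ 1 m0 ((-1 * r : ℝ) : ℂ) k1 (by simpa using hr)
  have e2 := fun x => c1 θ x 1 m0 ((-1 * r : ℝ) : ℂ) k1 (by simpa using hr.ne')
  set p := h (θ, 1) + I * (-1 * r : ℝ) * pdx h (θ, 1)
  obtain ⟨b, ⟨hb1, hb2⟩, hb3⟩ := (onC_compact H p 0 1).exists_isGreatest ⟨t, ht, x, hx⟩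
  have hb0 : b < 1 := lt_of_le_of_ne hb1.2 (by rintro rfl; obtain ⟨y, hy⟩ := hb2; exact e2 y hy)
  obtain ⟨y, hy⟩ := hb2
  obtain ⟨δ, hδ, f⟩ := after_L H S y b hb1
  rw [hy] at f
  set d := min δ (1 - b) / 2
  have hm : 0 < min δ (1 - b) := lt_min hδ (by linarith)
  have l1 : min δ (1 - b) ≤ δ := min_le_left _ _
  have l2 : min δ (1 - b) ≤ 1 - b := min_le_right _ _
  have hd : d = min δ (1 - b) / 2 := rfl
  have hno : ∀ s ∈ Icc (b + d) 1, ∀ x, h (x, s) ≠ p := by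
    intro s hs x hx
    have := hb3 ⟨⟨by linarith [hs.1, hb1.1], hs.2⟩, x, hx⟩
    linarith [hs.1]
  have g2 := f (b + d) ⟨by linarith [hb1.1], by linarith⟩ (by linarith) (by linarith)
    (fun ⟨x, hx⟩ => hno _ ⟨le_rfl, by linarith⟩ x hx)
  have g3 := Cau_const one2_smooth H.sm (fun _ _ => rfl) H.per (Compat.one h) (p := p)
    (s₁ := b + d) (s₂ := 1) (by linarith [hb1.1]) (by linarith) le_rfl hno
  exact hLR (by rw [← e1, ← g2, g3])

theorem inj_fderiv {h : ℝ × ℝ → ℂ} {z : ℝ × ℝ} (hx : pdx h z ≠ 0) (hi : (pdt h z / pdx h z).im ≠ 0) :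
    LinearMap.ker (fderiv ℝ h z : ℝ × ℝ →ₗ[ℝ] ℂ) = ⊥ := by
  rw [LinearMap.ker_eq_bot']
  intro v hv
  have hv : fderiv ℝ h z v = 0 := hv
  rw [fderiv_eq_pd] at hv
  have h1 : (v.1 : ℂ) + v.2 * (pdt h z / pdx h z) = 0 := by
    field_simp
    linear_combination hv
  have h2 : v.2 = 0 := by
    have := congrArg Complex.im h1
    simp only [Complex.add_im, Complex.ofReal_im, Complex.im_ofReal_mul, zero_add, Complex.zero_im] at this
    exact (mul_eq_zero.1 this).resolve_right hi
  rw [h2] at h1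
  have h3 : v.1 = 0 := by
    simpa using h1
  exact Prod.ext h3 h2

theorem bigO_reg {g h : ℝ × ℝ → ℂ} (hg : ContDiff ℝ (⊤ : ℕ∞) g) (hh : ContDiff ℝ (⊤ : ℕ∞) h) {z : ℝ × ℝ}
    (hx : pdx h z ≠ 0) (hi : (pdt h z / pdx h z).im ≠ 0) :
    (fun y => g y - g z) =O[𝓝 z] (fun y => h y - h z) := by
  have h1 : HasFDerivAt h (fderiv ℝ h z) z := (smooth_diff hh z).hasFDerivAt
  have h2 := (smooth_diff hg z).hasFDerivAt.isBigO_sub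
  have h3 := LinearMap.isClosedEmbedding_of_injective (inj_fderiv hx hi)
  have h4 := h1.isTheta_sub h3.isInducing
  exact h2.trans h4.symm.isBigO

theorem compact_bound {u v : ℝ × ℝ → ℂ} (hu : Continuous u) (hv : Continuous v) {K : Set (ℝ × ℝ)}
    (hK : IsCompact K) (z : ℝ × ℝ) (hz : u =O[𝓝 z] v) (hne : ∀ y ∈ K, y ≠ z → v y ≠ 0) :
    ∃ C, ∀ y ∈ K, ‖u y‖ ≤ C * ‖v y‖ := by
  refine hK.induction_on (p := fun s => ∃ C, ∀ y ∈ s, ‖u y‖ ≤ C * ‖v y‖) ?_ ?_ ?_ ?_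
  · exact ⟨0, by simp⟩
  · rintro s t hst ⟨C, hC⟩
    exact ⟨C, fun y hy => hC y (hst hy)⟩
  · rintro s t ⟨C, hC⟩ ⟨D, hD⟩
    refine ⟨max C D, ?_⟩
    rintro y (hy | hy)
    · exact (hC y hy).trans (mul_le_mul_of_nonneg_right (le_max_left _ _) (norm_nonneg _))
    · exact (hD y hy).trans (mul_le_mul_of_nonneg_right (le_max_right _ _) (norm_nonneg _))
  · intro y hy
    have hO : u =O[𝓝 y] v := by
      by_cases hyz : y = z
      · rw [hyz]; exact hz
      · have h1 : u =O[𝓝 y] (fun _ => (1:ℝ)) := hu.continuousAt.isBigO_one ℝ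
        refine h1.trans ?_
        have h2 : ∀ᶠ w in 𝓝 y, ‖v y‖ / 2 ≤ ‖v w‖ := by
          have : ‖v y‖ / 2 < ‖v y‖ := by
            have := norm_pos_iff.2 (hne y hy hyz)
            linarith
          exact (hv.norm.continuousAt.eventually_const_le this)
        apply Asymptotics.IsBigO.of_bound (2 / ‖v y‖)
        filter_upwards [h2] with w hw
        have := norm_pos_iff.2 (hne y hy hyz)
        rw [norm_one, div_mul_eq_mul_div, le_div_iff₀ this]
        linarith
    obtain ⟨C, hC⟩ := hO.bound
    exact ⟨_, mem_nhdsWithin_of_mem_nhds hC, C, fun y hy => hy⟩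

theorem Cau_shift {g h : ℝ × ℝ → ℂ} (hh : ContDiff ℝ (⊤ : ℕ∞) h)
    (pg : ∀ θ t, g (θ + 2 * π, t) = g (θ, t)) (ph : ∀ θ t, h (θ + 2 * π, t) = h (θ, t)) (p : ℂ) (s θ : ℝ) :
    Cau g h p s = ∫ x in (θ - π)..(θ + π), g (x, s) * pdx h (x, s) / (h (x, s) - p) := by
  have hp : Function.Periodic (fun x => g (x, s) * pdx h (x, s) / (h (x, s) - p)) (2 * π) := by
    intro x
    simp only [pg, ph, pdx_per hh ph]
  have := hp.intervalIntegral_add_eq 0 (θ - π)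
  rw [zero_add, show θ - π + 2 * π = θ + π by ring] at this
  exact this

theorem Cau_cont {g h : ℝ × ℝ → ℂ} (H : FD h) (hg : ContDiff ℝ (⊤ : ℕ∞) g)
    (pg : ∀ θ t, g (θ + 2 * π, t) = g (θ, t)) {θ a : ℝ} (ha : a ∈ Icc (0:ℝ) 1)
    (hi : (pdt h (θ, a) / pdx h (θ, a)).im ≠ 0) (h0 : g (θ, a) = 0)
    (hn : ∀ s ∈ Icc (0:ℝ) 1, s ≠ a → ¬ OnC h (h (θ, a)) s) :
    ContinuousWithinAt (Cau g h (h (θ, a))) (Icc 0 1) a := by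
  have hpi := Real.pi_pos
  have e : Cau g h (h (θ, a)) = fun s => ∫ x in (θ - π)..(θ + π), g (x, s) * pdx h (x, s) / (h (x, s) - h (θ, a)) := by
    funext s
    exact Cau_shift H.sm pg H.per _ s θ
  rw [e]
  have cg := hg.continuous
  have ch := H.sm.continuous
  have cx := (smooth_pdx H.sm).continuous
  let K : Set (ℝ × ℝ) := Icc (θ - π) (θ + π) ×ˢ Icc 0 1
  have hK : IsCompact K := isCompact_Icc.prod isCompact_Icc
  have hsame : ∀ x : ℝ, x ∈ Ioc (θ - π) (θ + π) → h (x, a) = h (θ, a) → x = θ := by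
    intro x hx hxe
    obtain ⟨k, hk⟩ := H.inj_mod ha hxe
    have k1 : (k:ℝ) < 1 := by
      by_contra hcon
      push Not at hcon
      nlinarith [hx.1, hx.2]
    have k2 : (-1:ℝ) < k := by
      by_contra hcon
      push Not at hcon
      nlinarith [hx.1, hx.2]
    have k3 : k = 0 := by
      have a1 : k < 1 := by exact_mod_cast k1
      have a2 : -1 < k := by exact_mod_cast k2
      omega
    rw [k3] at hk
    simpa using hk.symm
  have hsame' : ∀ x : ℝ, x ∈ Icc (θ - π) (θ + π) → h (x, a) = h (θ, a) → x = θ := by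
    intro x hx hxe
    rcases eq_or_lt_of_le hx.1 with h1 | h1
    · exfalso
      have := hsame (θ + π) ⟨by linarith, le_rfl⟩ (by
        rw [← hxe, ← h1, ← H.per (θ - π)]; congr 2; ring)
      linarith
    · exact hsame x ⟨h1, hx.2⟩ hxe
  obtain ⟨C, hC⟩ := compact_bound (u := g) (v := fun y => h y - h (θ, a)) cg (by fun_prop) hK (θ, a)
    (by have := bigO_reg hg H.sm (H.nz θ a ha) hi; simpa [h0] using this)
    (by
      rintro ⟨x, s⟩ ⟨hx, hs⟩ hne he
      have he : h (x, s) = h (θ, a) := sub_eq_zero.1 he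
      by_cases hsa : s = a
      · subst hsa
        exact hne (by rw [hsame' x hx he])
      · exact hn s hs hsa ⟨x, he⟩)
  obtain ⟨D, hD⟩ := hK.exists_bound_of_continuousOn cx.continuousOn
  have hle : θ - π ≤ θ + π := by linarith
  apply intervalIntegral.continuousWithinAt_of_dominated_interval (bound := fun _ => |C| * |D|)
  · apply Eventually.of_forall
    intro s
    apply Measurable.aestronglyMeasurable
    have m1 : Measurable fun x : ℝ => g (x, s) := Continuous.measurable (by fun_prop)
    have m2 : Measurable fun x : ℝ => pdx h (x, s) := Continuous.measurable (by fun_prop)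
    have m3 : Measurable fun x : ℝ => h (x, s) - h (θ, a) := Continuous.measurable (by fun_prop)
    exact (m1.mul m2).div m3
  · filter_upwards [self_mem_nhdsWithin] with s hs
    apply Eventually.of_forall
    intro x hx
    rw [uIoc_of_le hle] at hx
    have hm : (x, s) ∈ K := ⟨⟨hx.1.le, hx.2⟩, hs⟩
    have h1 := hC _ hm
    have h2 := hD _ hm
    rw [norm_div, norm_mul]
    by_cases hz : ‖h (x, s) - h (θ, a)‖ = 0
    · rw [hz]; simp; positivity
    · have hz' : 0 < ‖h (x, s) - h (θ, a)‖ := lt_of_le_of_ne (norm_nonneg _) (Ne.symm hz)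
      rw [div_le_iff₀ hz']
      have h3 : ‖g (x, s)‖ ≤ |C| * ‖h (x, s) - h (θ, a)‖ :=
        h1.trans (mul_le_mul_of_nonneg_right (le_abs_self C) (norm_nonneg _))
      have h4 : ‖pdx h (x, s)‖ ≤ |D| := h2.trans (le_abs_self D)
      calc _ ≤ (|C| * ‖h (x, s) - h (θ, a)‖) * |D| := mul_le_mul h3 h4 (norm_nonneg _) (by positivity)
        _ = _ := by ring
  · exact intervalIntegrable_const
  · have : ∀ᵐ x : ℝ, x ≠ θ := by
      simp [MeasureTheory.ae_iff]
    filter_upwards [this] with x hx hxm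
    rw [uIoc_of_le hle] at hxm
    apply ContinuousAt.continuousWithinAt
    apply ContinuousAt.div
    · fun_prop
    · fun_prop
    · intro hz
      exact hx (hsame x hxm (sub_eq_zero.1 hz))

theorem single_hit {h : ℝ × ℝ → ℂ} (H : FD h) {θ a : ℝ} (ha : a ∈ Icc (0:ℝ) 1)
    (hi : (pdt h (θ, a) / pdx h (θ, a)).im ≠ 0) {s : ℝ} (hs : s ∈ Icc (0:ℝ) 1) (hsa : s ≠ a) :
    ¬ OnC h (h (θ, a)) s := by
  intro hon
  obtain ⟨ε, hε, hcol⟩ := collar H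
  obtain ⟨δ, hδ, f⟩ := local_flow H H.sm (Compat.self h) hε θ a ha
  have key : ∀ r ∈ Icc (0:ℝ) 1, |r - a| < δ → r ≠ a → OnC h (h (θ, a)) r → False := by
    rintro r hr hra hne ⟨y, hy⟩
    obtain ⟨x, w, hw, hwε, hcc, hnz⟩ := f r hr hra
    rcases hcc with ⟨h1, -⟩ | ⟨h4, -⟩
    · exact hnz hi hne h1
    · exact hcol x y r hr w hwε h4 (by rw [hy, hw])
  rcases lt_or_gt_of_ne hsa with hlt | hlt
  · set r := max s (a - δ / 2)
    have r1 : s ≤ r := le_max_left _ _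
    have r2 : a - δ / 2 ≤ r := le_max_right _ _
    have r3 : r < a := max_lt hlt (by linarith)
    refine key r ⟨hs.1.trans r1, r3.le.trans ha.2⟩ (by rw [abs_of_neg (by linarith)]; linarith) r3.ne ?_
    exact onC_interval H hs.1 ha.2 hon ⟨θ, rfl⟩ ⟨r1, r3.le⟩
  · set r := min s (a + δ / 2)
    have r1 : r ≤ s := min_le_left _ _
    have r2 : r ≤ a + δ / 2 := min_le_right _ _
    have r3 : a < r := lt_min hlt (by linarith)
    refine key r ⟨ha.1.trans r3.le, r1.trans hs.2⟩ (by rw [abs_of_pos (by linarith)]; linarith) r3.ne' ?_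
    exact onC_interval H ha.1 hs.2 ⟨θ, rfl⟩ hon ⟨r3.le, r1⟩

theorem Cau_sub {g h : ℝ × ℝ → ℂ} (hg : ContDiff ℝ (⊤ : ℕ∞) g) (hh : ContDiff ℝ (⊤ : ℕ∞) h) (p q : ℂ) (s : ℝ)
    (hn : ∀ x, h (x, s) ≠ p) :
    Cau (fun z => g z - q) h p s = Cau g h p s - q * Cau one2 h p s := by
  have cg := hg.continuous
  have ch := hh.continuous
  have cx := (smooth_pdx hh).continuous
  have hne : ∀ x, h (x, s) - p ≠ 0 := fun x => sub_ne_zero.2 (hn x)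
  simp only [Cau, one2]
  rw [← intervalIntegral.integral_const_mul, ← intervalIntegral.integral_sub]
  · congr 1; ext x
    have := hne x
    field_simp
  · exact (Continuous.div (by fun_prop) (by fun_prop) hne).intervalIntegrable _ _
  · exact (continuous_const.mul (Continuous.div (by fun_prop) (by fun_prop) hne)).intervalIntegrable _ _

theorem pdx_sub_const (g : ℝ × ℝ → ℂ) (q : ℂ) : pdx (fun z => g z - q) = pdx g := by
  funext z; simp [pdx, fderiv_sub_const]
theorem pdt_sub_const (g : ℝ × ℝ → ℂ) (q : ℂ) : pdt (fun z => g z - q) = pdt g := by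
  funext z; simp [pdt, fderiv_sub_const]

theorem cauchy_formula {g h : ℝ × ℝ → ℂ} (H : FD h) {ε : ℝ} {L R : ℂ} (S : Sides h ε L R)
    (hg : ContDiff ℝ (⊤ : ℕ∞) g) (pg : ∀ θ t, g (θ + 2 * π, t) = g (θ, t)) (hc : Compat g h)
    {θ a : ℝ} (ha : a ∈ Ioo (0:ℝ) 1) (hi : (pdt h (θ, a) / pdx h (θ, a)).im ≠ 0) :
    g (θ, a) = (Cau g h (h (θ, a)) 1 - Cau g h (h (θ, a)) 0) / (L - R) := by
  have ha' : a ∈ Icc (0:ℝ) 1 := ⟨ha.1.le, ha.2.le⟩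
  set p := h (θ, a) with hp
  have hn : ∀ s ∈ Icc (0:ℝ) 1, s ≠ a → ¬ OnC h p s := fun s hs hsa => single_hit H ha' hi hs hsa
  have hn' : ∀ s ∈ Icc (0:ℝ) 1, s ≠ a → ∀ x, h (x, s) ≠ p := fun s hs hsa x hx => hn s hs hsa ⟨x, hx⟩
  have hconst0 : ∀ k : ℝ × ℝ → ℂ, ContDiff ℝ (⊤ : ℕ∞) k → (∀ θ t, k (θ + 2 * π, t) = k (θ, t)) → Compat k h →
      ∀ s, 0 ≤ s → s < a → Cau k h p 0 = Cau k h p s := by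
    intro k hk pk ck s hs0 hsa
    apply Cau_const hk H.sm pk H.per ck le_rfl hs0 (by linarith [ha.2])
    intro r hr
    exact hn' r ⟨hr.1, by linarith [hr.2, ha.2]⟩ (by linarith [hr.2])
  have hconst1 : ∀ k : ℝ × ℝ → ℂ, ContDiff ℝ (⊤ : ℕ∞) k → (∀ θ t, k (θ + 2 * π, t) = k (θ, t)) → Compat k h →
      ∀ s, a < s → s ≤ 1 → Cau k h p s = Cau k h p 1 := by
    intro k hk pk ck s hs0 hsa
    apply Cau_const hk H.sm pk H.per ck (by linarith [ha.1]) hsa le_rfl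
    intro r hr
    exact hn' r ⟨by linarith [hr.1, ha.1], hr.2⟩ (by linarith [hr.1])
  have eL : Cau one2 h p 1 = L := by
    obtain ⟨δ, hδ, f⟩ := after_L H S θ a ha'
    have m1 := min_le_left δ (1 - a)
    have m2 := min_le_right δ (1 - a)
    have m3 : 0 < min δ (1 - a) := lt_min hδ (by linarith [ha.2])
    rw [← hconst1 one2 one2_smooth (fun _ _ => rfl) (Compat.one h) (a + min δ (1 - a) / 2) (by linarith) (by linarith)]
    have : a + min δ (1 - a) / 2 ∈ Icc (0:ℝ) 1 := ⟨by linarith [ha.1], by linarith⟩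
    exact f _ this (by linarith) (by linarith) (hn _ this (by linarith))
  have eR : Cau one2 h p 0 = R := by
    obtain ⟨δ, hδ, f⟩ := before_R H S θ a ha'
    have m1 := min_le_left δ a
    have m2 := min_le_right δ a
    have m3 : 0 < min δ a := lt_min hδ ha.1
    rw [hconst0 one2 one2_smooth (fun _ _ => rfl) (Compat.one h) (a - min δ a / 2) (by linarith) (by linarith)]
    have : a - min δ a / 2 ∈ Icc (0:ℝ) 1 := ⟨by linarith [ha.1], by linarith [ha.2]⟩
    exact f _ this (by linarith) (by linarith) (hn _ this (by linarith))
  let k : ℝ × ℝ → ℂ := fun z => g z - g (θ, a)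
  have hk : ContDiff ℝ (⊤ : ℕ∞) k := hg.sub contDiff_const
  have pk : ∀ θ t, k (θ + 2 * π, t) = k (θ, t) := fun x t => by simp only [k, pg]
  have ck : Compat k h := by
    intro x t ht
    simp only [k, pdx_sub_const, pdt_sub_const]
    exact hc x t ht
  have hcont := Cau_cont H hk pk ha' hi (by simp [k]) hn
  rw [← hp] at hcont
  have t0 : Cau k h p a = Cau k h p 0 := by
    have h1 : Tendsto (Cau k h p) (𝓝[<] a) (𝓝 (Cau k h p a)) := by
      refine hcont.mono_left ?_
      rw [← nhdsWithin_Ico_eq_nhdsLT ha.1]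
      exact nhdsWithin_mono _ (fun s hs => ⟨hs.1, by linarith [hs.2, ha.2]⟩)
    refine tendsto_nhds_unique h1 ?_
    apply tendsto_const_nhds.congr'
    filter_upwards [Ico_mem_nhdsLT ha.1] with s hs
    exact hconst0 k hk pk ck s hs.1 hs.2
  have t1 : Cau k h p a = Cau k h p 1 := by
    have h1 : Tendsto (Cau k h p) (𝓝[>] a) (𝓝 (Cau k h p a)) := by
      refine hcont.mono_left ?_
      rw [← nhdsWithin_Ioc_eq_nhdsGT ha.2]
      exact nhdsWithin_mono _ (fun s hs => ⟨by linarith [hs.1, ha.1], hs.2⟩)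
    refine tendsto_nhds_unique h1 ?_
    apply tendsto_const_nhds.congr'
    filter_upwards [Ioc_mem_nhdsGT ha.2] with s hs
    exact (hconst1 k hk pk ck s hs.1 hs.2).symm
  have t2 := t0.symm.trans t1
  simp only [k] at t2
  rw [Cau_sub hg H.sm _ _ _ (hn' 0 (by simp) ha.1.ne), Cau_sub hg H.sm _ _ _ (hn' 1 (by simp) ha.2.ne'), eL, eR] at t2
  rw [eq_div_iff (sub_ne_zero.2 S.ne)]
  linear_combination t2

theorem Cau_diff {g h : ℝ × ℝ → ℂ} (hg : ContDiff ℝ (⊤ : ℕ∞) g) (hh : ContDiff ℝ (⊤ : ℕ∞) h) (s : ℝ)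
    (ph : ∀ θ t, h (θ + 2 * π, t) = h (θ, t)) (p : ℂ) (hn : ∀ x, h (x, s) ≠ p) :
    DifferentiableAt ℂ (fun p => Cau g h p s) p := by
  have cg := hg.continuous
  have ch := hh.continuous
  have cx := (smooth_pdx hh).continuous
  have hpi := Real.pi_pos
  have hle : (0:ℝ) ≤ 2 * π := by positivity
  obtain ⟨x₀, -, hx₀⟩ := isCompact_Icc.exists_isMinOn (nonempty_Icc.2 hle)
    (f := fun x => ‖h (x, s) - p‖) (by fun_prop)
  set r := ‖h (x₀, s) - p‖ with hr
  have hrpos : 0 < r := norm_pos_iff.2 (sub_ne_zero.2 (hn x₀))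
  obtain ⟨C, hC⟩ := (isCompact_Icc (a := (0:ℝ)) (b := 2 * π)).exists_bound_of_continuousOn
    (f := fun x => g (x, s) * pdx h (x, s)) (by fun_prop)
  have hlow : ∀ x ∈ Icc 0 (2 * π), ∀ q ∈ Metric.ball p (r / 2), r / 2 ≤ ‖h (x, s) - q‖ := by
    intro x hx q hq
    have h1 : r ≤ ‖h (x, s) - p‖ := hx₀ hx
    have h2 : ‖q - p‖ < r / 2 := by simpa [dist_eq_norm] using hq
    have h3 : ‖h (x, s) - p‖ ≤ ‖h (x, s) - q‖ + ‖q - p‖ := by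
      have := norm_add_le (h (x, s) - q) (q - p)
      simpa using this
    linarith
  have key := intervalIntegral.hasDerivAt_integral_of_dominated_loc_of_deriv_le
    (μ := MeasureTheory.volume) (a := 0) (b := 2 * π) (𝕜 := ℂ)
    (F := fun q x => g (x, s) * pdx h (x, s) / (h (x, s) - q))
    (F' := fun q x => g (x, s) * pdx h (x, s) / (h (x, s) - q) ^ 2)
    (bound := fun _ => C / (r / 2) ^ 2)
    (Metric.ball_mem_nhds p (half_pos hrpos)) (x₀ := p) ?_ ?_ ?_ ?_ ?_ ?_
  · exact key.2.differentiableAt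
  · apply Eventually.of_forall
    intro q
    apply Measurable.aestronglyMeasurable
    have m1 : Measurable fun x : ℝ => g (x, s) := Continuous.measurable (by fun_prop)
    have m2 : Measurable fun x : ℝ => pdx h (x, s) := Continuous.measurable (by fun_prop)
    have m3 : Measurable fun x : ℝ => h (x, s) - q := Continuous.measurable (by fun_prop)
    exact (m1.mul m2).div m3
  · apply Continuous.intervalIntegrable
    exact Continuous.div (by fun_prop) (by fun_prop) (fun x => sub_ne_zero.2 (hn x))
  · apply Measurable.aestronglyMeasurable
    have m1 : Measurable fun x : ℝ => g (x, s) := Continuous.measurable (by fun_prop)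
    have m2 : Measurable fun x : ℝ => pdx h (x, s) := Continuous.measurable (by fun_prop)
    have m3 : Measurable fun x : ℝ => (h (x, s) - p) ^ 2 := Continuous.measurable (by fun_prop)
    exact (m1.mul m2).div m3
  · apply Eventually.of_forall
    intro x hx q hq
    rw [uIoc_of_le hle] at hx
    have hx' : x ∈ Icc 0 (2 * π) := ⟨hx.1.le, hx.2⟩
    have h1 := hC x hx'
    have h2 := hlow x hx' q hq
    rw [norm_div, norm_pow]
    have h0 : 0 ≤ C := (norm_nonneg _).trans h1
    gcongr
  · exact intervalIntegrable_const
  · apply Eventually.of_forall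
    intro x hx q hq
    rw [uIoc_of_le hle] at hx
    have hx' : x ∈ Icc 0 (2 * π) := ⟨hx.1.le, hx.2⟩
    have h2 := hlow x hx' q hq
    have h3 : h (x, s) - q ≠ 0 := by
      intro h4
      rw [h4, norm_zero] at h2
      linarith
    have h5 : HasDerivAt (fun q : ℂ => h (x, s) - q) (-1) q := by
      simpa using (hasDerivAt_id q).const_sub (h (x, s))
    have h6 := (hasDerivAt_const q (g (x, s) * pdx h (x, s))).div h5 h3
    have e : (0 * (h (x, s) - q) - g (x, s) * pdx h (x, s) * -1) / (h (x, s) - q) ^ 2 =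
      g (x, s) * pdx h (x, s) / (h (x, s) - q) ^ 2 := by ring
    rw [e] at h6
    exact h6

/-- Sard: regular values are dense. -/
theorem sard_dense {h : ℝ × ℝ → ℂ} (H : FD h) {U : Set ℂ} (hU : IsOpen U) (hne : U.Nonempty) :
    ∃ p ∈ U, ∀ θ, ∀ t ∈ Icc (0:ℝ) 1, h (θ, t) = p → (pdt h (θ, t) / pdx h (θ, t)).im ≠ 0 := by
  let S : Set (ℝ × ℝ) := {z | z.2 ∈ Icc (0:ℝ) 1 ∧ (pdt h z / pdx h z).im = 0}
  let e := Complex.equivRealProdCLM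
  let f : ℝ × ℝ → ℝ × ℝ := fun z => e (h z)
  let f' : ℝ × ℝ → (ℝ × ℝ →L[ℝ] ℝ × ℝ) := fun z => (e : ℂ →L[ℝ] ℝ × ℝ).comp (fderiv ℝ h z)
  have h0 : MeasureTheory.volume (f '' S) = 0 := by
    apply MeasureTheory.addHaar_image_eq_zero_of_det_fderivWithin_eq_zero (f' := f')
    · intro z hz
      exact ((e : ℂ →L[ℝ] ℝ × ℝ).hasFDerivAt.comp z (smooth_diff H.sm z).hasFDerivAt).hasFDerivWithinAt
    · rintro z ⟨hz1, hz2⟩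
      by_contra hdet
      have hinj : Function.Injective (f' z) := ((f' z : ℝ × ℝ →ₗ[ℝ] ℝ × ℝ).equivOfDetNeZero hdet).injective
      have hx : pdx h z ≠ 0 := H.nz z.1 z.2 hz1
      have hk : f' z (-(pdt h z / pdx h z).re, 1) = 0 := by
        have h1 : fderiv ℝ h z (-(pdt h z / pdx h z).re, 1) = 0 := by
          rw [fderiv_eq_pd]
          have hq := Complex.re_add_im (pdt h z / pdx h z)
          rw [hz2] at hq
          simp only [Complex.ofReal_zero, zero_mul, add_zero] at hq
          push_cast
          rw [hq]
          field_simp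
          ring
        simp [f', h1]
      have := hinj (hk.trans (map_zero (f' z)).symm)
      have := congrArg Prod.snd this
      simp at this
  have hUo : IsOpen (e '' U) := e.toHomeomorph.isOpenMap U hU
  have hpos : 0 < MeasureTheory.volume (e '' U) := hUo.measure_pos _ (hne.image _)
  have : ¬ (e '' U ⊆ f '' S) := by
    intro hs
    have := MeasureTheory.measure_mono (μ := MeasureTheory.volume) hs
    rw [h0] at this
    exact absurd this (not_le.2 hpos)
  rw [not_subset] at this
  obtain ⟨_, ⟨p, hp, rfl⟩, hnot⟩ := this
  refine ⟨p, hp, ?_⟩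
  intro θ t ht hpt him
  exact hnot ⟨(θ, t), ⟨ht, him⟩, by simp only [f, hpt]⟩

theorem holo {g h : ℝ × ℝ → ℂ} (H : FD h) (hg : ContDiff ℝ (⊤ : ℕ∞) g)
    (pg : ∀ θ t, g (θ + 2 * π, t) = g (θ, t)) (hc : Compat g h) {ψ : ℂ → ℂ}
    (hψ : ContinuousOn ψ (h '' (univ ×ˢ Icc (0:ℝ) 1)))
    (he : ∀ θ, ∀ t ∈ Icc (0:ℝ) 1, ψ (h (θ, t)) = g (θ, t)) :
    DifferentiableOn ℂ ψ (interior (h '' (univ ×ˢ Icc (0:ℝ) 1))) := by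
  obtain ⟨ε, hε, L, R, hLR, c1, c2, c3⟩ := sides H
  have S : Sides h ε L R := ⟨hε, hLR, c1, c2, c3⟩
  set A := h '' (univ ×ˢ Icc (0:ℝ) 1) with hA
  let G : ℂ → ℂ := fun p => (Cau g h p 1 - Cau g h p 0) / (L - R)
  have hG : DifferentiableOn ℂ G (interior A) := by
    intro p hp
    apply DifferentiableAt.differentiableWithinAt
    apply DifferentiableAt.div_const
    apply DifferentiableAt.sub
    · apply Cau_diff hg H.sm 1 H.per
      rintro x rfl
      exact bdry1 H x hp
    · apply Cau_diff hg H.sm 0 H.per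
      rintro x rfl
      exact bdry0 H x hp
  let D : Set ℂ := {p | p ∈ interior A ∧ ψ p = G p}
  have hDd : interior A ⊆ closure D := by
    intro p hp
    rw [_root_.mem_closure_iff]
    intro U hU hpU
    obtain ⟨q, ⟨hqU, hqA⟩, hq⟩ := sard_dense H (hU.inter isOpen_interior) ⟨p, hpU, hp⟩
    refine ⟨q, hqU, hqA, ?_⟩
    obtain ⟨⟨θ, a⟩, ⟨-, ha⟩, rfl⟩ := interior_subset hqA
    have ha0 : a ≠ 0 := by rintro rfl; exact bdry0 H θ hqA
    have ha1 : a ≠ 1 := by rintro rfl; exact bdry1 H θ hqA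
    rw [he θ a ha]
    exact cauchy_formula H S hg pg hc ⟨lt_of_le_of_ne ha.1 (Ne.symm ha0), lt_of_le_of_ne ha.2 ha1⟩ (hq θ a ha rfl)
  have hEq : EqOn ψ G (interior A) :=
    EqOn.of_subset_closure (s := D) (fun p hp => hp.2) (hψ.mono interior_subset) hG.continuousOn
      (fun p hp => hp.1) hDd
  exact hG.congr hEq

theorem exists_map {g h : ℝ × ℝ → ℂ} (H : FD h) (hg : ContDiff ℝ (⊤ : ℕ∞) g)
    (pg : ∀ θ t, g (θ + 2 * π, t) = g (θ, t)) (hc : Compat g h) :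
    ∃ ψ : ℂ → ℂ, (∀ θ, ∀ t ∈ Icc (0:ℝ) 1, ψ (h (θ, t)) = g (θ, t)) ∧
      ContinuousOn ψ (h '' (univ ×ˢ Icc (0:ℝ) 1)) ∧
      DifferentiableOn ℂ ψ (interior (h '' (univ ×ˢ Icc (0:ℝ) 1))) := by
  have hex : ∀ z : ℂ, ∃ w : ℝ × ℝ, z ∈ h '' (univ ×ˢ Icc (0:ℝ) 1) → w.2 ∈ Icc (0:ℝ) 1 ∧ h w = z := by
    intro z
    by_cases hz : z ∈ h '' (univ ×ˢ Icc (0:ℝ) 1)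
    · obtain ⟨w, hw, rfl⟩ := hz
      exact ⟨w, fun _ => ⟨hw.2, rfl⟩⟩
    · exact ⟨0, fun h => absurd h hz⟩
  choose w hw using hex
  have he : ∀ θ, ∀ t ∈ Icc (0:ℝ) 1, g (w (h (θ, t))) = g (θ, t) := by
    intro θ t ht
    obtain ⟨h1, h2⟩ := hw (h (θ, t)) ⟨(θ, t), ⟨trivial, ht⟩, rfl⟩
    exact well_defined H hg pg hc (θ₀ := (w (h (θ, t))).1) (t₀ := (w (h (θ, t))).2) h1 ht h2
  have hcont : ContinuousOn (fun z => g (w z)) (h '' (univ ×ˢ Icc (0:ℝ) 1)) := by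
    rw [continuousOn_iff_isClosed]
    intro T hT
    let K : Set (ℝ × ℝ) := Icc (0:ℝ) (2 * π) ×ˢ Icc 0 1
    refine ⟨h '' (K ∩ g ⁻¹' T), ?_, ?_⟩
    · apply IsCompact.isClosed
      apply IsCompact.image _ H.sm.continuous
      exact (isCompact_Icc.prod isCompact_Icc).inter_right (hT.preimage hg.continuous)
    · ext z
      constructor
      · rintro ⟨h1, ⟨⟨θ, t⟩, ⟨-, ht⟩, rfl⟩⟩
        refine ⟨?_, ⟨(θ, t), ⟨trivial, ht⟩, rfl⟩⟩
        simp only [mem_preimage, he θ t ht] at h1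
        obtain ⟨y, hy, k, hk⟩ := exists_mod H.per θ t
        refine ⟨(y, t), ⟨⟨hy, ht⟩, ?_⟩, ?_⟩
        · simp only [mem_preimage]
          rw [hk, FD.per_int pg]; exact h1
        · rw [hk, FD.per_int H.per]
      · rintro ⟨⟨⟨x, t⟩, ⟨⟨h1, h2⟩, h3⟩, rfl⟩, h4⟩
        refine ⟨?_, h4⟩
        simp only [mem_preimage, he x t h2]
        exact h3
  exact ⟨fun z => g (w z), he, hcont, holo H hg pg hc hcont he⟩

theorem open_of_reg {h : ℝ × ℝ → ℂ} (H : FD h) {z : ℝ × ℝ} (hz : z.2 ∈ Ioo (0:ℝ) 1)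
    (hi : (pdt h z / pdx h z).im ≠ 0) : h z ∈ interior (h '' (univ ×ˢ Icc (0:ℝ) 1)) := by
  have hx : pdx h z ≠ 0 := H.nz z.1 z.2 ⟨hz.1.le, hz.2.le⟩
  have hstr : HasStrictFDerivAt h (fderiv ℝ h z) z :=
    (H.sm.contDiffAt).hasStrictFDerivAt (by simp)
  have hsurj : LinearMap.range (fderiv ℝ h z : ℝ × ℝ →ₗ[ℝ] ℂ) = ⊤ := by
    have h1 := LinearMap.finrank_range_add_finrank_ker (fderiv ℝ h z : ℝ × ℝ →ₗ[ℝ] ℂ)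
    rw [inj_fderiv hx hi] at h1
    apply Submodule.eq_top_of_finrank_eq
    simp [Complex.finrank_real_complex] at h1 ⊢
    exact h1
  have hmap := hstr.map_nhds_eq_of_surj hsurj
  rw [mem_interior_iff_mem_nhds, ← hmap]
  have : (univ ×ˢ Icc (0:ℝ) 1 : Set (ℝ × ℝ)) ∈ 𝓝 z :=
    prod_mem_nhds univ_mem (Icc_mem_nhds hz.1 hz.2)
  exact image_mem_map this

theorem converse_dir {h ht : ℝ × ℝ → ℂ} (H : FD h) (Ht : FD ht) {ψ : ℂ → ℂ}
    (hd : DifferentiableOn ℂ ψ (interior (h '' (univ ×ˢ Icc (0:ℝ) 1))))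
    (he : ∀ θ, ∀ t ∈ Icc (0:ℝ) 1, ψ (h (θ, t)) = ht (θ, t)) : Compat ht h := by
  let E : Set (ℝ × ℝ) := {z | pdt ht z * pdx h z = pdx ht z * pdt h z}
  have hE : IsClosed E := by
    have a1 := (smooth_pdx H.sm).continuous
    have a2 := (smooth_pdt H.sm).continuous
    have a3 := (smooth_pdx Ht.sm).continuous
    have a4 := (smooth_pdt Ht.sm).continuous
    exact isClosed_eq (by fun_prop) (by fun_prop)
  set A := h '' (univ ×ˢ Icc (0:ℝ) 1) with hA
  let St : Set (ℝ × ℝ) := univ ×ˢ Ioo (0:ℝ) 1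
  have hSt : IsOpen St := isOpen_univ.prod isOpen_Ioo
  let P : Set (ℝ × ℝ) := {z | z ∈ St ∧ h z ∈ interior A}
  have hPE : P ⊆ E := by
    rintro z ⟨hz, hzi⟩
    have h1 : HasFDerivAt ψ ((fderiv ℂ ψ (h z)).restrictScalars ℝ) (h z) :=
      (hd.differentiableAt (isOpen_interior.mem_nhds hzi)).hasFDerivAt.restrictScalars ℝ
    have h2 := h1.comp z (smooth_diff H.sm z).hasFDerivAt
    have h3 : HasFDerivAt ht (fderiv ℝ ht z) z := (smooth_diff Ht.sm z).hasFDerivAt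
    have h4 : ψ ∘ h =ᶠ[𝓝 z] ht := by
      filter_upwards [hSt.mem_nhds hz] with y hy
      exact he y.1 y.2 ⟨hy.2.1.le, hy.2.2.le⟩
    have h5 := h3.unique (h2.congr_of_eventuallyEq h4.symm)
    have key : ∀ v, fderiv ℝ ht z v = fderiv ℂ ψ (h z) 1 * fderiv ℝ h z v := by
      intro v
      rw [h5]
      simp only [ContinuousLinearMap.comp_apply, ContinuousLinearMap.coe_restrictScalars']
      have := (fderiv ℂ ψ (h z)).map_smul (fderiv ℝ h z v) 1
      simp only [smul_eq_mul, mul_one] at this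
      rw [this, mul_comm]
    change pdt ht z * pdx h z = pdx ht z * pdt h z
    simp only [pdt, pdx, key]
    ring
  have hStE : St ⊆ E := by
    intro z hz
    by_cases hzP : z ∈ closure P
    · exact closure_minimal hPE hE hzP
    obtain ⟨θ, t⟩ := z
    have hU : St ∩ (closure P)ᶜ ∈ 𝓝 (θ, t) :=
      (hSt.inter isClosed_closure.isOpen_compl).mem_nhds ⟨hz, hzP⟩
    have htI : t ∈ Icc (0:ℝ) 1 := ⟨hz.2.1.le, hz.2.2.le⟩
    have hreal : ∀ y ∈ St ∩ (closure P)ᶜ, ((pdt h y / pdx h y).re : ℂ) = pdt h y / pdx h y := by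
      rintro y ⟨hy1, hy2⟩
      have him : (pdt h y / pdx h y).im = 0 := by
        by_contra hne
        exact hy2 (subset_closure ⟨hy1, open_of_reg H hy1.2 hne⟩)
      have := Complex.re_add_im (pdt h y / pdx h y)
      rw [him] at this
      simpa using this
    obtain ⟨φ, hφt, hφ⟩ := flow_exists H θ t htI
    have hcφ : ContinuousAt (fun s => (φ s, s)) t := hφ.self_of_nhds.continuousAt.prodMk continuousAt_id
    have hev : ∀ᶠ s in 𝓝 t, (φ s, s) ∈ St ∩ (closure P)ᶜ := by
      apply hcφ
      simp only [hφt]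
      exact hU
    obtain ⟨δ, hδ, hb⟩ := Metric.eventually_nhds_iff_ball.1 (hφ.and hev)
    have hder : ∀ s ∈ Metric.ball t δ, HasDerivAt (fun s => h (φ s, s)) 0 s := by
      intro s hs
      obtain ⟨h1, h2⟩ := hb s hs
      have h3 := hasDerivAt_path H.sm h1 (hasDerivAt_id s)
      simp only [id] at h3
      have e : ((-(pdt h (φ s, s) / pdx h (φ s, s))).re : ℂ) * pdx h (φ s, s) +
          ((1:ℝ) : ℂ) * pdt h (φ s, s) = 0 := by
        rw [Complex.neg_re]
        push_cast
        rw [hreal _ h2]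
        have := H.nz (φ s) s ⟨h2.1.2.1.le, h2.1.2.2.le⟩
        field_simp
        ring
      rw [e] at h3
      exact h3
    have hconst : ∀ s ∈ Metric.ball t δ, h (φ s, s) = h (θ, t) := by
      intro s hs
      have := Metric.isOpen_ball.is_const_of_deriv_eq_zero (convex_ball t δ).isPreconnected
        (fun y hy => (hder y hy).differentiableAt.differentiableWithinAt)
        (fun y hy => (hder y hy).deriv) hs (Metric.mem_ball_self hδ)
      simpa [hφt] using this
    have hconst2 : (fun s => ht (φ s, s)) =ᶠ[𝓝 t] fun _ => ψ (h (θ, t)) := by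
      filter_upwards [Metric.ball_mem_nhds t hδ] with s hs
      have h2 := (hb s hs).2
      rw [← he (φ s) s ⟨h2.1.2.1.le, h2.1.2.2.le⟩, hconst s hs]
    have h5 : HasDerivAt (fun s => ht (φ s, s)) 0 t :=
      (hasDerivAt_const t (ψ (h (θ, t)))).congr_of_eventuallyEq hconst2
    have h6 := hasDerivAt_path Ht.sm hφ.self_of_nhds (hasDerivAt_id t)
    simp only [id] at h6
    have h7 := h6.unique h5
    rw [hφt, Complex.neg_re] at h7
    push_cast at h7
    rw [hreal _ ⟨hz, hzP⟩] at h7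
    have hnz := H.nz θ t htI
    change pdt ht (θ, t) * pdx h (θ, t) = pdx ht (θ, t) * pdt h (θ, t)
    field_simp at h7
    linear_combination h7
  intro θ t htI
  have : (θ, t) ∈ closure St := by
    rw [closure_prod_eq, closure_univ, closure_Ioo (by norm_num)]
    exact ⟨trivial, htI⟩
  exact closure_minimal hStE hE this

end FramedHelpers

theorem framed_annuli_isomorphic_iff_same_path
    (h ht : ℝ × ℝ → ℂ)
    (hsm : ContDiff ℝ (⊤ : ℕ∞) h) (htsm : ContDiff ℝ (⊤ : ℕ∞) ht)
    (hper : ∀ θ t, h (θ + 2 * π, t) = h (θ, t))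
    (htper : ∀ θ t, ht (θ + 2 * π, t) = ht (θ, t))
    (hinj : ∀ t ∈ Icc (0:ℝ) 1, InjOn (fun θ => h (θ, t)) (Ico 0 (2 * π)))
    (htinj : ∀ t ∈ Icc (0:ℝ) 1, InjOn (fun θ => ht (θ, t)) (Ico 0 (2 * π)))
    (hderiv : ∀ θ : ℝ, ∀ t ∈ Icc (0:ℝ) 1, deriv (fun x => h (x, t)) θ ≠ 0)
    (htderiv : ∀ θ : ℝ, ∀ t ∈ Icc (0:ℝ) 1, deriv (fun x => ht (x, t)) θ ≠ 0)
    (hinward : ∀ θ : ℝ, ∀ t ∈ Icc (0:ℝ) 1,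
      (deriv (fun s => h (θ, s)) t / deriv (fun x => h (x, t)) θ).im ≤ 0)
    (htinward : ∀ θ : ℝ, ∀ t ∈ Icc (0:ℝ) 1,
      (deriv (fun s => ht (θ, s)) t / deriv (fun x => ht (x, t)) θ).im ≤ 0)
    (A At : Set ℂ)
    (hA : A = h '' (univ ×ˢ Icc (0:ℝ) 1)) (hAt : At = ht '' (univ ×ˢ Icc (0:ℝ) 1))
    (hfront : frontier A ⊆ (range fun θ => h (θ, 0)) ∪ (range fun θ => h (θ, 1)))
    (htfront : frontier At ⊆ (range fun θ => ht (θ, 0)) ∪ (range fun θ => ht (θ, 1)))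
    (X Xt : ℝ × ℝ → ℂ)
    (hX : ∀ θ t, X (θ, t) = -(deriv (fun s => h (θ, s)) t) / deriv (fun x => h (x, t)) θ)
    (hXt : ∀ θ t, Xt (θ, t) = -(deriv (fun s => ht (θ, s)) t) / deriv (fun x => ht (x, t)) θ) :
    ((∃ ψ χ : ℂ → ℂ, IsFramedIso h ht A At ψ χ) ↔
      (∀ θ : ℝ, ∀ t ∈ Icc (0:ℝ) 1, X (θ, t) = Xt (θ, t))) ∧
    (∀ ψ χ ψ' χ' : ℂ → ℂ, IsFramedIso h ht A At ψ χ → IsFramedIso h ht A At ψ' χ' →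
      EqOn ψ ψ' A) := by
  have mkFD : ∀ k : ℝ × ℝ → ℂ, ContDiff ℝ (⊤ : ℕ∞) k → (∀ θ t, k (θ + 2 * π, t) = k (θ, t)) →
      (∀ t ∈ Icc (0:ℝ) 1, InjOn (fun θ => k (θ, t)) (Ico 0 (2 * π))) →
      (∀ θ : ℝ, ∀ t ∈ Icc (0:ℝ) 1, deriv (fun x => k (x, t)) θ ≠ 0) →
      (∀ θ : ℝ, ∀ t ∈ Icc (0:ℝ) 1,
        (deriv (fun s => k (θ, s)) t / deriv (fun x => k (x, t)) θ).im ≤ 0) → FD k := by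
    intro k h1 h2 h3 h4 h5
    refine ⟨h1, h2, h3, ?_, ?_⟩
    · intro θ t ht
      rw [← (hasDerivAt_x h1 θ t).deriv]
      exact h4 θ t ht
    · intro θ t ht
      rw [← (hasDerivAt_x h1 θ t).deriv, ← (hasDerivAt_t h1 θ t).deriv]
      exact h5 θ t ht
  have H : FD h := mkFD h hsm hper hinj hderiv hinward
  have Ht : FD ht := mkFD ht htsm htper htinj htderiv htinward
  have eX : ∀ θ t, X (θ, t) = -(pdt h (θ, t)) / pdx h (θ, t) := by
    intro θ t
    rw [hX, (hasDerivAt_x hsm θ t).deriv, (hasDerivAt_t hsm θ t).deriv]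
  have eXt : ∀ θ t, Xt (θ, t) = -(pdt ht (θ, t)) / pdx ht (θ, t) := by
    intro θ t
    rw [hXt, (hasDerivAt_x htsm θ t).deriv, (hasDerivAt_t htsm θ t).deriv]
  have hiff : (∀ θ : ℝ, ∀ t ∈ Icc (0:ℝ) 1, X (θ, t) = Xt (θ, t)) ↔ Compat ht h := by
    unfold Compat
    apply forall_congr'
    intro θ
    apply forall_congr'
    intro t
    apply forall_congr'
    intro hm
    rw [eX, eXt, div_eq_div_iff (H.nz θ t hm) (Ht.nz θ t hm)]
    constructor
    · intro e; linear_combination e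
    · intro e; linear_combination e
  subst hA hAt
  refine ⟨?_, ?_⟩
  · rw [hiff]
    constructor
    · rintro ⟨ψ, χ, hf⟩
      exact converse_dir H Ht hf.2.2.2.2.2.2.1 hf.2.2.2.2.2.2.2.2
    · intro hc
      have hc' : Compat h ht := by
        intro θ t hm
        linear_combination -hc θ t hm
      obtain ⟨ψ, a1, a2, a3⟩ := exists_map H htsm htper hc
      obtain ⟨χ, b1, b2, b3⟩ := exists_map Ht hsm hper hc'
      refine ⟨ψ, χ, a2, b2, ?_, ?_, ?_, ?_, a3, b3, a1⟩
      · rintro _ ⟨⟨θ, t⟩, ⟨-, hm⟩, rfl⟩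
        rw [a1 θ t hm]
        exact ⟨(θ, t), ⟨trivial, hm⟩, rfl⟩
      · rintro _ ⟨⟨θ, t⟩, ⟨-, hm⟩, rfl⟩
        rw [b1 θ t hm]
        exact ⟨(θ, t), ⟨trivial, hm⟩, rfl⟩
      · rintro _ ⟨⟨θ, t⟩, ⟨-, hm⟩, rfl⟩
        rw [a1 θ t hm, b1 θ t hm]
      · rintro _ ⟨⟨θ, t⟩, ⟨-, hm⟩, rfl⟩
        rw [b1 θ t hm, a1 θ t hm]
  · rintro ψ χ ψ' χ' hf hf' _ ⟨⟨θ, t⟩, ⟨-, hm⟩, rfl⟩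
    rw [hf.2.2.2.2.2.2.2.2 θ t hm, hf'.2.2.2.2.2.2.2.2 θ t hm]
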